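/- Let L = {L_1,...,L_n} be constant-coefficient complex vector fields of the normalized form L_j = ∂_{x_j} + Σ_k a_{jk}∂_{x_{n+k}}, n ≥ 2, and 1 < p < ∞. For every φ ∈ C_c^∞(B(0,1)) there exist smooth vector fields V_2, W_2 with φ = V_2 · W_2 such that: supp W_2 ⊂ B(0,1), supp V_2 ⊂ B(0,2), div_{L*} V_2 = 0, ‖V_2‖_{L^p} ≤ C_2 with C_2 independent of φ, ‖W_2‖_{L^{p'}} = ‖φ‖_{L^{p'}}, and ‖curl_L W_2‖_{L^{p'}} ≤ 2‖∇_L φ‖_{L^{p'}}. -/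

import Mathlib

open MeasureTheory Finset Metric
open scoped ENNReal NNReal ComplexConjugate

noncomputable section

/-- `ℝ^N` with the Euclidean norm. -/
abbrev RN (N : ℕ) := EuclideanSpace ℝ (Fin N)

/-- Partial derivative of a complex-valued function on `ℝ^N`. -/
def pd {N : ℕ} (i : Fin N) (f : RN N → ℂ) (x : RN N) : ℂ :=
  fderiv ℝ f x (EuclideanSpace.single i 1)

/-- Partial derivative of a real-valued function on `ℝ^N`. -/
def pdR {N : ℕ} (i : Fin N) (f : RN N → ℝ) (x : RN N) : ℝ :=
  fderiv ℝ f x (EuclideanSpace.single i 1)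

/-- Constant coefficient complex vector field with coefficients `c : Fin N → ℂ`,
applied to a function `f`:  `L f = ∑ i, c i • ∂_i f`. -/
def vf {N : ℕ} (c : Fin N → ℂ) (f : RN N → ℂ) (x : RN N) : ℂ :=
  ∑ i, c i * pd i f x

/-- Formal adjoint `L* = - conj(L)` of the constant coefficient vector field `c`. -/
def vfStar {N : ℕ} (c : Fin N → ℂ) (f : RN N → ℂ) (x : RN N) : ℂ :=
  - vf (fun i => conj (c i)) f x

/-- Test functions: smooth and compactly supported (complex valued). -/
def IsTest {N : ℕ} (u : RN N → ℂ) : Prop := ContDiff ℝ (⊤ : ℕ∞) u ∧ HasCompactSupport u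

/-- Test functions: smooth and compactly supported (real valued). -/
def IsTestR {N : ℕ} (u : RN N → ℝ) : Prop := ContDiff ℝ (⊤ : ℕ∞) u ∧ HasCompactSupport u

/-- Classical ellipticity of `Δ_L = ∑ L_j* L_j` for the system with coefficient
matrix `c`: the principal symbol `∑_j |∑_i c_{ji} ξ_i|²` does not vanish for `ξ ≠ 0`. -/
def EllipticSystem {n N : ℕ} (c : Fin n → Fin N → ℂ) : Prop :=
  ∀ ξ : Fin N → ℝ, ξ ≠ 0 → ∑ j, ‖∑ i, c j i * (ξ i : ℂ)‖ ^ 2 ≠ 0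

/-- `div_{L*} V = f` in the sense of distributions: tested against all test functions,
`⟨div_{L*} V, u⟩ = ∫ V ⋅ conj (∇_L u) = ∫ f conj u`. -/
def DivLStarEq {n N : ℕ} (c : Fin n → Fin N → ℂ) (V : Fin n → RN N → ℂ)
    (f : RN N → ℂ) : Prop :=
  ∀ u : RN N → ℂ, IsTest u →
    ∫ x, ∑ j, V j x * conj (vf (c j) u x) = ∫ x, f x * conj (u x)

/-- `curl_L W = A` in the sense of distributions:
`⟨(curl_L W)_{ij}, u⟩ = -∫ (W_j L_i u - W_i L_j u) = ∫ A_{ij} u`. -/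
def CurlLEq {n N : ℕ} (c : Fin n → Fin N → ℂ) (W : Fin n → RN N → ℂ)
    (A : Fin n → Fin n → RN N → ℂ) : Prop :=
  ∀ i j, ∀ u : RN N → ℂ, IsTest u →
    -∫ x, (W j x * vf (c i) u x - W i x * vf (c j) u x) = ∫ x, A i j x * u x

/-- `L^p` norm of a vector field, with the Euclidean norm in the fibers. -/
def vLpNorm {𝕜 : Type*} [RCLike 𝕜] {n N : ℕ} (V : Fin n → RN N → 𝕜) (p : ℝ≥0∞) : ℝ≥0∞ :=
  eLpNorm (fun x => ((WithLp.equiv 2 (Fin n → 𝕜)).symm fun j => V j x)) p volume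

/-- `L^p` norm of a matrix-valued field. -/
def mLpNorm {𝕜 : Type*} [RCLike 𝕜] {n N : ℕ} (A : Fin n → Fin n → RN N → 𝕜)
    (p : ℝ≥0∞) : ℝ≥0∞ :=
  eLpNorm (fun x => ((WithLp.equiv 2 (Fin n × Fin n → 𝕜)).symm
    fun ij => A ij.1 ij.2 x)) p volume

/-- The dilated bump `φ_t(x - y) = t^{-N} φ((x-y)/t)`. -/
def dil {N : ℕ} (φ : RN N → ℝ) (t : ℝ) (x y : RN N) : ℝ :=
  (t ^ N)⁻¹ * φ (t⁻¹ • (x - y))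

/-- The local (truncated) maximal function `m_φ g (x) = sup_{0<t<1} |g * φ_t (x)|`. -/
def mphi {N : ℕ} (φ : RN N → ℝ) (g : RN N → ℂ) (x : RN N) : ℝ≥0∞ :=
  ⨆ (t : ℝ) (_ : t ∈ Set.Ioo (0:ℝ) 1), ENNReal.ofReal ‖∫ y, g y * (dil φ t x y : ℂ)‖

/-- The `h^1` norm of `g` with respect to the bump `φ`. -/
def h1Norm {N : ℕ} (φ : RN N → ℝ) (g : RN N → ℂ) : ℝ≥0∞ :=
  ∫⁻ x, mphi φ g x

/-- An admissible bump for `h^1`: smooth, compactly supported, nonzero integral. -/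
def Admissible {N : ℕ} (φ : RN N → ℝ) : Prop :=
  ContDiff ℝ (⊤ : ℕ∞) φ ∧ HasCompactSupport φ ∧ (∫ x, φ x) ≠ 0

/-- The uncentered Hardy–Littlewood maximal function of a (real-valued) function. -/
def hlMax {N : ℕ} (g : RN N → ℝ) (x : RN N) : ℝ≥0∞ :=
  ⨆ (z : RN N) (r : ℝ) (_ : x ∈ ball z r),
    (volume (ball z r))⁻¹ * ∫⁻ y in ball z r, ENNReal.ofReal ‖g y‖

/-- Coefficients of the normalized vector field `L_j = ∂_j + ∑_k a_{jk} ∂_{n+k}`. -/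
def normCoeff {n m : ℕ} (a : Fin n → Fin m → ℂ) (j : Fin n) : Fin (n + m) → ℂ :=
  Fin.append (Pi.single j 1) (a j)

/-- `g` is the weak (distributional) gradient of `ψ` (complex valued). -/
def WeakGradC {N : ℕ} (ψ : RN N → ℂ) (g : Fin N → RN N → ℂ) : Prop :=
  ∀ i, ∀ u : RN N → ℂ, IsTest u → ∫ x, ψ x * pd i u x = -∫ x, g i x * u x

/-- `g` is the weak (distributional) gradient of `ψ` (real valued). -/
def WeakGradR {N : ℕ} (ψ : RN N → ℝ) (g : Fin N → RN N → ℝ) : Prop :=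
  ∀ i, ∀ u : RN N → ℝ, IsTestR u → ∫ x, ψ x * pdR i u x = -∫ x, g i x * u x

/-- Pointwise Euclidean length of a vector of complex numbers. -/
def vAbs {n N : ℕ} (V : Fin n → RN N → ℂ) (x : RN N) : ℝ :=
  Real.sqrt (∑ j, ‖V j x‖ ^ 2)

/-!
For a stream function `h`, the skew gradient `L̄₁ h · e₂ - L̄₂ h · e₁` is divergence free because
constant-coefficient fields commute. With `h = s⁻¹ x₁ η`, where `η` is a bump equal to `1` on the
unit ball, it equals `s⁻¹ e₂` there; this is `V`. The field `W = √(1 - s²) φ e₁ + s φ̄ e₂` satisfies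
`|W| = |φ|` and `V · W = φ`. The curl of a field with one nonzero component `u` is at most
`√2 |∇_L u|` pointwise, so the curl of `W` is at most `√2 (‖∇_L φ‖_q + s ‖∇_L φ̄‖_q)` in norm, and
a small `s` gives the constant `2` as soon as `‖∇_L φ̄‖_q ≤ K ‖∇_L φ‖_q`.

To prove the latter, write `L_k = X + iY` with real fields `X`, `Y`. Since `|L_k φ̄|` is
`|(X - iY) φ|`, it suffices to bound `∂ = X - iY` by `∂̄ = X + iY` in `L^q`, with no independence of
`X` and `Y` required. Replace the derivatives by central differences with a small step, and let `P`
be the average over the corresponding five-point cross, so that `1 - P = -∂∂̄/5`. With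
`F = (1 + P) ∂̄f`, the pairing `∫ ∂f · g` telescopes into `(1/5) ∑_j ∫ ∂(P^j F) · ∂(P^j g)`. A
function of size `x^q + y^r` whose second derivative dominates the product of the increments (a
Bellman function) bounds that sum by `‖∂̄f‖_q^q + ‖g‖_r^r` uniformly in the step, and duality
concludes.
-/

section Taylor

variable {f f' f'' : ℝ → ℝ}

lemma mul_sub_le_sub_of_le_hasDerivAt {u v C : ℝ} (huv : u ≤ v)
    (hf : ∀ t ∈ Set.Icc u v, HasDerivAt f (f' t) t) (hC : ∀ t ∈ Set.Icc u v, C ≤ f' t) :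
    C * (v - u) ≤ f v - f u := by
  refine (convex_Icc u v).mul_sub_le_image_sub_of_le_deriv
    (fun t ht => (hf t ht).continuousAt.continuousWithinAt)
    (fun t ht => (hf t (interior_subset ht)).differentiableAt.differentiableWithinAt)
    (fun t ht => ?_) u (Set.left_mem_Icc.2 huv) v (Set.right_mem_Icc.2 huv) huv
  rw [(hf t (interior_subset ht)).deriv]
  exact hC t (interior_subset ht)

lemma div_eight_le_taylor_remainder {m : ℝ} (hf : ∀ t ∈ Set.Icc (0 : ℝ) 1, HasDerivAt f (f' t) t)
    (hf' : ∀ t ∈ Set.Icc (0 : ℝ) 1, HasDerivAt f' (f'' t) t)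
    (hconvex : ∀ t ∈ Set.Icc (0 : ℝ) 1, 0 ≤ f'' t)
    (hm : ∀ t ∈ Set.Icc (1 / 4 : ℝ) (1 / 2), m ≤ f'' t) :
    m / 8 ≤ f 1 - f 0 - f' 0 := by
  have hsub {u v : ℝ} (hu : 0 ≤ u) (hv : v ≤ 1) : Set.Icc u v ⊆ Set.Icc (0 : ℝ) 1 :=
    Set.Icc_subset_Icc hu hv
  have hmono {u v : ℝ} (hu : 0 ≤ u) (huv : u ≤ v) (hv : v ≤ 1) : f' u ≤ f' v := by
    have := mul_sub_le_sub_of_le_hasDerivAt huv (fun t ht => hf' t (hsub hu hv ht))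
      (fun t ht => hconvex t (hsub hu hv ht))
    linarith
  have hgain : m * (1 / 2 - 1 / 4) ≤ f' (1 / 2) - f' (1 / 4) :=
    mul_sub_le_sub_of_le_hasDerivAt (by norm_num)
      (fun t ht => hf' t (hsub (by norm_num) (by norm_num) ht)) hm
  have hquarter : f' 0 ≤ f' (1 / 4) := hmono le_rfl (by norm_num) (by norm_num)
  have hleft : f' 0 * (1 / 2 - 0) ≤ f (1 / 2) - f 0 :=
    mul_sub_le_sub_of_le_hasDerivAt (by norm_num)
      (fun t ht => hf t (hsub le_rfl (by norm_num) ht))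
      (fun t ht => hmono le_rfl ht.1 (ht.2.trans (by norm_num)))
  have hright : f' (1 / 2) * (1 - 1 / 2) ≤ f 1 - f (1 / 2) :=
    mul_sub_le_sub_of_le_hasDerivAt (by norm_num)
      (fun t ht => hf t (hsub (by norm_num) le_rfl ht))
      (fun t ht => hmono (by norm_num) ht.1 ht.2)
  linarith

end Taylor

section Bellman

/-- The sum `x ^ q + y ^ r`, which controls the Bellman function. -/
def powSum (q r x y : ℝ) : ℝ := x ^ q + y ^ r

/-- The derivative of `powSum` at `(x, y)` in the direction `(a, b)`. Powers `x ^ (q - 1)` are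
written `x ^ q / x`, so that the formulas of this section are rational in `x`, `y`, `x ^ q`,
`y ^ r`. -/
def powSumDeriv (q r x y a b : ℝ) : ℝ := q * x ^ q / x * a + r * y ^ r / y * b

/-- The second derivative of `powSum` at `(x, y)` in the direction `(a, b)`. -/
def powSumDeriv₂ (q r x y a b : ℝ) : ℝ :=
  q * (q - 1) * x ^ q * (a / x) ^ 2 + r * (r - 1) * y ^ r * (b / y) ^ 2

/-- A Bellman function for the pair of exponents `2 ≤ q`, `1 < r ≤ 2`, on the quadrant `0 ≤ x, y`.
For `q, r` conjugate and `M` large, its second derivative dominates the product of the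
increments of the two variables. -/
def bellman (q r M x y : ℝ) : ℝ := M * y ^ r + x ^ 2 * powSum q r x y ^ (1 - 2 / q)

/-- The derivative of `bellman` at `(x, y)` in the direction `(a, b)`. -/
def bellmanDeriv (q r M x y a b : ℝ) : ℝ :=
  M * (r * y ^ r / y * b) + (2 * x * a * powSum q r x y ^ (1 - 2 / q) +
    x ^ 2 * ((1 - 2 / q) * (powSum q r x y ^ (1 - 2 / q) / powSum q r x y)
      * powSumDeriv q r x y a b))

/-- The second derivative of `bellman` at `(x, y)` in the direction `(a, b)`. -/
def bellmanDeriv₂ (q r M x y a b : ℝ) : ℝ :=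
  M * (r * (r - 1) * y ^ r * (b / y) ^ 2) +
    x ^ 2 * powSum q r x y ^ (1 - 2 / q) *
      (2 * (a / x) ^ 2
        + 4 * (1 - 2 / q) * (a / x) * (powSumDeriv q r x y a b / powSum q r x y)
        - (1 - 2 / q) * (1 - (1 - 2 / q)) * (powSumDeriv q r x y a b / powSum q r x y) ^ 2
        + (1 - 2 / q) * (powSumDeriv₂ q r x y a b / powSum q r x y))

variable {q r M : ℝ}

lemma one_sub_two_div_nonneg (hq : 2 ≤ q) : 0 ≤ 1 - 2 / q := by
  rw [sub_nonneg, div_le_one (by linarith)]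
  exact hq

lemma sq_mul_powSum_rpow_le {x y : ℝ} (hq : 2 ≤ q) (hx : 0 ≤ x) (hy : 0 ≤ y) :
    x ^ 2 * powSum q r x y ^ (1 - 2 / q) ≤ powSum q r x y := by
  have hq0 : 0 < q := by linarith
  have hyr : 0 ≤ y ^ r := by positivity
  rcases eq_or_lt_of_le hx with rfl | hx
  · simpa [powSum, Real.zero_rpow hq0.ne'] using hyr
  have hS : 0 < powSum q r x y := by unfold powSum; positivity
  have hsq : x ^ 2 ≤ powSum q r x y ^ (2 / q) := by
    calc x ^ 2 = (x ^ q) ^ (2 / q) := by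
          rw [← Real.rpow_mul hx.le, mul_div_cancel₀ _ hq0.ne']; norm_cast
      _ ≤ powSum q r x y ^ (2 / q) := by
          gcongr
          simpa only [powSum] using le_add_of_nonneg_right hyr
  calc x ^ 2 * powSum q r x y ^ (1 - 2 / q)
      ≤ powSum q r x y ^ (2 / q) * powSum q r x y ^ (1 - 2 / q) := by gcongr
    _ = powSum q r x y := by rw [← Real.rpow_add hS]; simp

section Derivatives

variable {u v : ℝ → ℝ} {a b t : ℝ}

lemma hasDerivAt_rpow_comp (hu : HasDerivAt u a t) (hut : 0 < u t) (s : ℝ) :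
    HasDerivAt (fun τ => u τ ^ s) (s * u t ^ s / u t * a) t := by
  refine (hu.rpow_const (p := s) (Or.inl hut.ne')).congr_deriv ?_
  rw [Real.rpow_sub_one hut.ne']
  ring

lemma hasDerivAt_mul_rpow_div_mul_const (hu : HasDerivAt u a t) (hut : 0 < u t) (s : ℝ) :
    HasDerivAt (fun τ => s * u τ ^ s / u τ * a) (s * (s - 1) * u t ^ s * (a / u t) ^ 2) t := by
  refine ((((hasDerivAt_rpow_comp hu hut s).const_mul s).div hu hut.ne').mul_const a).congr_deriv ?_
  field_simp

lemma hasDerivAt_powSum (hu : HasDerivAt u a t) (hv : HasDerivAt v b t)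
    (hut : 0 < u t) (hvt : 0 < v t) :
    HasDerivAt (fun τ => powSum q r (u τ) (v τ)) (powSumDeriv q r (u t) (v t) a b) t :=
  (hasDerivAt_rpow_comp hu hut q).add (hasDerivAt_rpow_comp hv hvt r)

lemma hasDerivAt_powSumDeriv (hu : HasDerivAt u a t) (hv : HasDerivAt v b t)
    (hut : 0 < u t) (hvt : 0 < v t) :
    HasDerivAt (fun τ => powSumDeriv q r (u τ) (v τ) a b)
      (powSumDeriv₂ q r (u t) (v t) a b) t :=
  (hasDerivAt_mul_rpow_div_mul_const hu hut q).add (hasDerivAt_mul_rpow_div_mul_const hv hvt r)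

lemma powSum_pos {x y : ℝ} (hx : 0 < x) (hy : 0 < y) : 0 < powSum q r x y :=
  add_pos (Real.rpow_pos_of_pos hx q) (Real.rpow_pos_of_pos hy r)

lemma hasDerivAt_powSum_rpow (hu : HasDerivAt u a t) (hv : HasDerivAt v b t)
    (hut : 0 < u t) (hvt : 0 < v t) (θ : ℝ) :
    HasDerivAt (fun τ => powSum q r (u τ) (v τ) ^ θ)
      (θ * (powSum q r (u t) (v t) ^ θ / powSum q r (u t) (v t))
        * powSumDeriv q r (u t) (v t) a b) t := by
  refine (hasDerivAt_rpow_comp (hasDerivAt_powSum hu hv hut hvt)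
    (powSum_pos hut hvt) θ).congr_deriv ?_
  ring

lemma hasDerivAt_bellman (hu : HasDerivAt u a t) (hv : HasDerivAt v b t)
    (hut : 0 < u t) (hvt : 0 < v t) :
    HasDerivAt (fun τ => bellman q r M (u τ) (v τ)) (bellmanDeriv q r M (u t) (v t) a b) t := by
  refine (((hasDerivAt_rpow_comp hv hvt r).const_mul M).add
    ((hu.pow 2).mul (hasDerivAt_powSum_rpow hu hv hut hvt _))).congr_deriv ?_
  simp [bellmanDeriv]

lemma hasDerivAt_bellmanDeriv (hu : HasDerivAt u a t) (hv : HasDerivAt v b t)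
    (hut : 0 < u t) (hvt : 0 < v t) :
    HasDerivAt (fun τ => bellmanDeriv q r M (u τ) (v τ) a b)
      (bellmanDeriv₂ q r M (u t) (v t) a b) t := by
  have hS : 0 < powSum q r (u t) (v t) := powSum_pos hut hvt
  have hSθ := hasDerivAt_powSum_rpow (q := q) (r := r) hu hv hut hvt (1 - 2 / q)
  refine (((hasDerivAt_mul_rpow_div_mul_const hv hvt r).const_mul M).add
    ((((hu.const_mul 2).mul_const a).mul hSθ).add
      ((hu.pow 2).mul (((hSθ.div (hasDerivAt_powSum hu hv hut hvt) hS.ne').const_mul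
        (1 - 2 / q)).mul (hasDerivAt_powSumDeriv hu hv hut hvt))))).congr_deriv ?_
  simp only [bellmanDeriv₂, Pi.pow_apply, Pi.mul_apply, Pi.div_apply]
  generalize 1 - 2 / q = θ
  push_cast
  field_simp
  ring

end Derivatives

/-- With `α = a / x`, `β = b / y`, `σ = x ^ q / powSum q r x y`, the right-hand side is the
second derivative of `f = x ^ 2 * powSum q r x y ^ θ` divided by `f`, less nonnegative terms. -/
lemma neg_sq_le_logDeriv_quadratic {θ α β σ : ℝ} (hθ0 : 0 ≤ θ) (hθ1 : θ ≤ 1)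
    (hθq : (1 - θ) * q = 2) (hr0 : 0 ≤ r) (hr2 : r ≤ 2) (hσ0 : 0 ≤ σ) (hσ1 : σ ≤ 1) :
    -(16 * (1 - σ) * β ^ 2) ≤ α ^ 2 + 4 * θ * α * (q * σ * α + r * (1 - σ) * β)
      - θ * (1 - θ) * (q * σ * α + r * (1 - σ) * β) ^ 2 := by
  have hq : 0 ≤ q := by nlinarith
  have : 0 ≤ 1 - θ := sub_nonneg.2 hθ1
  set k := r * (1 - σ) * β with hk
  have hk2 : k ^ 2 ≤ 4 * (1 - σ) * β ^ 2 := by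
    have hσ : (1 - σ) ^ 2 ≤ 1 - σ := by nlinarith
    have hr : r ^ 2 ≤ 4 := by nlinarith
    calc k ^ 2 = r ^ 2 * (1 - σ) ^ 2 * β ^ 2 := by rw [hk]; ring
      _ ≤ 4 * (1 - σ) * β ^ 2 := by gcongr
  have hsquare : θ * (1 - θ) * (q * σ * α + k) ^ 2
      ≤ 4 * θ * q * σ * α ^ 2 + 2 * (θ * (1 - θ)) * k ^ 2 := by
    have hσ : σ ^ 2 ≤ σ := by nlinarith
    calc θ * (1 - θ) * (q * σ * α + k) ^ 2
        ≤ θ * (1 - θ) * (2 * ((q * σ * α) ^ 2 + k ^ 2)) := by gcongr; exact add_sq_le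
      _ = 2 * θ * ((1 - θ) * q) * q * σ ^ 2 * α ^ 2 + 2 * (θ * (1 - θ)) * k ^ 2 := by ring
      _ = 4 * θ * q * σ ^ 2 * α ^ 2 + 2 * (θ * (1 - θ)) * k ^ 2 := by rw [hθq]; ring
      _ ≤ _ := by gcongr
  have hcross : -(4 * θ ^ 2 * k ^ 2) ≤ α ^ 2 + 4 * θ * α * k := by
    nlinarith only [sq_nonneg (α + 2 * θ * k)]
  have hk4 : (4 * θ ^ 2 + 2 * (θ * (1 - θ))) * k ^ 2 ≤ 4 * k ^ 2 := by
    gcongr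
    nlinarith
  linarith

lemma neg_mul_sq_le_powSum_logDeriv_quadratic {x y : ℝ} (hq : 2 ≤ q) (hr0 : 0 ≤ r) (hr2 : r ≤ 2)
    (hx : 0 < x) (hy : 0 < y) (a b : ℝ) :
    -(16 * (y ^ r / powSum q r x y) * (b / y) ^ 2) ≤
      (a / x) ^ 2 + 4 * (1 - 2 / q) * (a / x) * (powSumDeriv q r x y a b / powSum q r x y)
        - (1 - 2 / q) * (1 - (1 - 2 / q)) * (powSumDeriv q r x y a b / powSum q r x y) ^ 2 := by
  have hθq : (1 - (1 - 2 / q)) * q = 2 := by field_simp; ring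
  have hX : 0 < x ^ q := Real.rpow_pos_of_pos hx q
  have hY : 0 < y ^ r := Real.rpow_pos_of_pos hy r
  have hS : 0 < powSum q r x y := powSum_pos hx hy
  have hσ : 1 - x ^ q / powSum q r x y = y ^ r / powSum q r x y := by
    rw [eq_div_iff hS.ne', sub_mul, div_mul_cancel₀ _ hS.ne']; simp [powSum]
  have hσ1 : x ^ q / powSum q r x y ≤ 1 := by linarith [div_pos hY hS]
  have hlog : powSumDeriv q r x y a b / powSum q r x y =
      q * (x ^ q / powSum q r x y) * (a / x)
        + r * (1 - x ^ q / powSum q r x y) * (b / y) := by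
    rw [hσ, powSumDeriv]; ring
  rw [hlog, ← hσ]
  exact neg_sq_le_logDeriv_quadratic (one_sub_two_div_nonneg hq) (sub_le_self _ (by positivity))
    hθq hr0 hr2 (div_pos hX hS).le hσ1

lemma le_bellmanDeriv₂ {x y : ℝ} (hq : 2 ≤ q) (hr1 : 1 ≤ r) (hr2 : r ≤ 2)
    (hM : 17 ≤ M * (r * (r - 1))) (hx : 0 < x) (hy : 0 < y) (a b : ℝ) :
    a ^ 2 * powSum q r x y ^ (1 - 2 / q) + y ^ (r - 2) * b ^ 2
      ≤ bellmanDeriv₂ q r M x y a b := by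
  have hS : 0 < powSum q r x y := powSum_pos hx hy
  have hT : x ^ 2 * powSum q r x y ^ (1 - 2 / q) ≤ powSum q r x y :=
    sq_mul_powSum_rpow_le hq hx.le hy.le
  have hT0 : 0 ≤ x ^ 2 * powSum q r x y ^ (1 - 2 / q) := by positivity
  have hquad :=
    neg_mul_sq_le_powSum_logDeriv_quadratic hq (zero_le_one.trans hr1) hr2 hx hy a b
  have hconvex : 0 ≤ (1 - 2 / q) * (powSumDeriv₂ q r x y a b / powSum q r x y) := by
    have := one_sub_two_div_nonneg hq
    have : 0 ≤ q - 1 := by linarith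
    have : 0 ≤ r - 1 := by linarith
    unfold powSumDeriv₂
    positivity
  have hyr : y ^ (r - 2) * b ^ 2 = y ^ r * (b / y) ^ 2 := by
    rw [Real.rpow_sub hy, Real.rpow_two]; field_simp
  have hax : a ^ 2 * powSum q r x y ^ (1 - 2 / q)
      = x ^ 2 * powSum q r x y ^ (1 - 2 / q) * (a / x) ^ 2 := by field_simp
  rw [hyr, hax, bellmanDeriv₂]
  set S := powSum q r x y
  have hloss : x ^ 2 * S ^ (1 - 2 / q) * (16 * (y ^ r / S) * (b / y) ^ 2)
      ≤ 16 * (y ^ r * (b / y) ^ 2) := by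
    calc _ ≤ S * (16 * (y ^ r / S) * (b / y) ^ 2) := by gcongr
      _ = _ := by field_simp
  have hgain : 17 * (y ^ r * (b / y) ^ 2) ≤ M * (r * (r - 1)) * (y ^ r * (b / y) ^ 2) := by
    gcongr
  linarith [mul_le_mul_of_nonneg_left hquad hT0, mul_nonneg hT0 hconvex]

end Bellman

section BellmanDefect

variable {q r M : ℝ}

lemma le_two_of_holderConjugate (hqr : q.HolderConjugate r) (hq : 2 ≤ q) : r ≤ 2 := by
  nlinarith [hqr.mul_eq_add, hqr.symm.lt]

lemma rpow_sub_two_le_powSum_rpow {x y : ℝ} (hq : 2 ≤ q) (hx : 0 < x) (hy : 0 ≤ y) :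
    x ^ (q - 2) ≤ powSum q r x y ^ (1 - 2 / q) := by
  have hexp : q * (1 - 2 / q) = q - 2 := by field_simp
  rw [← hexp, Real.rpow_mul hx.le]
  exact Real.rpow_le_rpow (by positivity) (le_add_of_nonneg_right (by positivity))
    (one_sub_two_div_nonneg hq)

lemma rpow_two_sub_le_powSum_rpow {x y : ℝ} (hqr : q.HolderConjugate r) (hq : 2 ≤ q)
    (hx : 0 ≤ x) (hy : 0 < y) : y ^ (2 - r) ≤ powSum q r x y ^ (1 - 2 / q) := by
  have hexp : r * (1 - 2 / q) = 2 - r := by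
    field_simp
    linarith [hqr.mul_eq_add]
  rw [← hexp, Real.rpow_mul hy.le]
  exact Real.rpow_le_rpow (by positivity) (le_add_of_nonneg_left (by positivity))
    (one_sub_two_div_nonneg hq)

/-- The error of the first order Taylor expansion of `bellman` at `(x₀, y₀)`, evaluated at
`(x₁, y₁)`. -/
def bellmanDefect (q r M x₀ y₀ x₁ y₁ : ℝ) : ℝ :=
  bellman q r M x₁ y₁ - bellman q r M x₀ y₀ - bellmanDeriv q r M x₀ y₀ (x₁ - x₀) (y₁ - y₀)

lemma segment_pos {x₀ x₁ t : ℝ} (hx₀ : 0 < x₀) (hx₁ : 0 < x₁) (ht : t ∈ Set.Icc (0 : ℝ) 1) :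
    0 < x₀ + t * (x₁ - x₀) := by
  simpa [smul_eq_mul] using (convex_Ioi (0 : ℝ)).add_smul_sub_mem hx₀ hx₁ ht

variable {x₀ y₀ x₁ y₁ : ℝ}

lemma div_eight_le_bellmanDefect {m : ℝ} (hq : 2 ≤ q) (hr1 : 1 ≤ r) (hr2 : r ≤ 2)
    (hM : 17 ≤ M * (r * (r - 1))) (hx₀ : 0 < x₀) (hy₀ : 0 < y₀) (hx₁ : 0 < x₁) (hy₁ : 0 < y₁)
    (hm : ∀ t ∈ Set.Icc (1 / 4 : ℝ) (1 / 2),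
      m ≤ (x₁ - x₀) ^ 2
            * powSum q r (x₀ + t * (x₁ - x₀)) (y₀ + t * (y₁ - y₀)) ^ (1 - 2 / q)
          + (y₀ + t * (y₁ - y₀)) ^ (r - 2) * (y₁ - y₀) ^ 2) :
    m / 8 ≤ bellmanDefect q r M x₀ y₀ x₁ y₁ := by
  set a := x₁ - x₀ with ha
  set b := y₁ - y₀ with hb
  have hx {t : ℝ} (ht : t ∈ Set.Icc (0 : ℝ) 1) : 0 < x₀ + t * a := segment_pos hx₀ hx₁ ht
  have hy {t : ℝ} (ht : t ∈ Set.Icc (0 : ℝ) 1) : 0 < y₀ + t * b := segment_pos hy₀ hy₁ ht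
  have hline (c d t : ℝ) : HasDerivAt (fun τ => c + τ * d) d t := by
    simpa using ((hasDerivAt_id t).mul_const d).const_add c
  have hlower {t : ℝ} (ht : t ∈ Set.Icc (0 : ℝ) 1) :=
    le_bellmanDeriv₂ hq hr1 hr2 hM (hx ht) (hy ht) a b
  have hsub : Set.Icc (1 / 4 : ℝ) (1 / 2) ⊆ Set.Icc 0 1 :=
    Set.Icc_subset_Icc (by norm_num) (by norm_num)
  have htaylor := div_eight_le_taylor_remainder
    (fun t ht => hasDerivAt_bellman (q := q) (r := r) (M := M)
      (hline x₀ a t) (hline y₀ b t) (hx ht) (hy ht))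
    (fun t ht => hasDerivAt_bellmanDeriv (hline x₀ a t) (hline y₀ b t) (hx ht) (hy ht))
    (fun t ht => le_trans (by have := powSum_pos (q := q) (r := r) (hx ht) (hy ht)
                              have := hy ht
                              positivity) (hlower ht))
    (fun t ht => (hm t ht).trans (hlower (hsub ht)))
  simpa [bellmanDefect, ha, hb] using htaylor

lemma half_le_segment {t : ℝ} (hy₀ : 0 ≤ y₀) (hy₁ : 0 ≤ y₁) (ht : t ∈ Set.Icc (1 / 4 : ℝ) (1 / 2)) :
    y₀ / 2 ≤ y₀ + t * (y₁ - y₀) := by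
  nlinarith [ht.1, ht.2]

lemma abs_sub_div_four_le_segment {t : ℝ} (hx₀ : 0 ≤ x₀) (hx₁ : 0 ≤ x₁)
    (ht : t ∈ Set.Icc (1 / 4 : ℝ) (1 / 2)) : |x₁ - x₀| / 4 ≤ x₀ + t * (x₁ - x₀) := by
  rcases abs_cases (x₁ - x₀) with ⟨h, _⟩ | ⟨h, _⟩ <;> rw [h] <;> nlinarith [ht.1, ht.2]

lemma segment_le_max {t : ℝ} (ht : t ∈ Set.Icc (1 / 4 : ℝ) (1 / 2)) :
    y₀ + t * (y₁ - y₀) ≤ max y₀ y₁ := by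
  nlinarith [ht.1, ht.2, le_max_left y₀ y₁, le_max_right y₀ y₁]

lemma sq_sub_mul_half_rpow_le_bellmanDefect (hqr : q.HolderConjugate r) (hq : 2 ≤ q)
    (hM : 17 ≤ M * (r * (r - 1)))
    (hx₀ : 0 < x₀) (hy₀ : 0 < y₀) (hx₁ : 0 < x₁) (hy₁ : 0 < y₁) :
    (x₁ - x₀) ^ 2 * (y₀ / 2) ^ (2 - r) / 8 ≤ bellmanDefect q r M x₀ y₀ x₁ y₁ := by
  have hr2 := le_two_of_holderConjugate hqr hq
  refine div_eight_le_bellmanDefect hq hqr.symm.lt.le hr2 hM hx₀ hy₀ hx₁ hy₁ fun t ht => ?_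
  have ht01 : t ∈ Set.Icc (0 : ℝ) 1 := ⟨by linarith [ht.1], by linarith [ht.2]⟩
  have hyt := segment_pos hy₀ hy₁ ht01
  refine le_add_of_le_of_nonneg ?_ (by positivity)
  gcongr
  exact (Real.rpow_le_rpow (by positivity) (half_le_segment hy₀.le hy₁.le ht) (by linarith)).trans
    (rpow_two_sub_le_powSum_rpow hqr hq (segment_pos hx₀ hx₁ ht01).le hyt)

lemma sq_sub_mul_quarter_rpow_le_bellmanDefect (hqr : q.HolderConjugate r) (hq : 2 ≤ q)
    (hM : 17 ≤ M * (r * (r - 1)))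
    (hx₀ : 0 < x₀) (hy₀ : 0 < y₀) (hx₁ : 0 < x₁) (hy₁ : 0 < y₁) :
    (x₁ - x₀) ^ 2 * (|x₁ - x₀| / 4) ^ (q - 2) / 8 ≤ bellmanDefect q r M x₀ y₀ x₁ y₁ := by
  have hr2 := le_two_of_holderConjugate hqr hq
  refine div_eight_le_bellmanDefect hq hqr.symm.lt.le hr2 hM hx₀ hy₀ hx₁ hy₁ fun t ht => ?_
  have ht01 : t ∈ Set.Icc (0 : ℝ) 1 := ⟨by linarith [ht.1], by linarith [ht.2]⟩
  have hyt := segment_pos hy₀ hy₁ ht01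
  refine le_add_of_le_of_nonneg ?_ (by positivity)
  gcongr
  exact (Real.rpow_le_rpow (by positivity) (abs_sub_div_four_le_segment hx₀.le hx₁.le ht)
    (by linarith)).trans (rpow_sub_two_le_powSum_rpow hq (segment_pos hx₀ hx₁ ht01) hyt.le)

lemma max_rpow_mul_sq_sub_le_bellmanDefect (hqr : q.HolderConjugate r) (hq : 2 ≤ q)
    (hM : 17 ≤ M * (r * (r - 1)))
    (hx₀ : 0 < x₀) (hy₀ : 0 < y₀) (hx₁ : 0 < x₁) (hy₁ : 0 < y₁) :
    max y₀ y₁ ^ (r - 2) * (y₁ - y₀) ^ 2 / 8 ≤ bellmanDefect q r M x₀ y₀ x₁ y₁ := by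
  have hr2 := le_two_of_holderConjugate hqr hq
  refine div_eight_le_bellmanDefect hq hqr.symm.lt.le hr2 hM hx₀ hy₀ hx₁ hy₁ fun t ht => ?_
  have ht01 : t ∈ Set.Icc (0 : ℝ) 1 := ⟨by linarith [ht.1], by linarith [ht.2]⟩
  have hyt := segment_pos hy₀ hy₁ ht01
  have hS := powSum_pos (q := q) (r := r) (segment_pos hx₀ hx₁ ht01) hyt
  refine le_add_of_nonneg_of_le (by positivity) ?_
  gcongr ?_ * _
  exact Real.rpow_le_rpow_of_nonpos hyt (segment_le_max ht) (by linarith)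

lemma bellmanDefect_nonneg (hqr : q.HolderConjugate r) (hq : 2 ≤ q) (hM : 17 ≤ M * (r * (r - 1)))
    (hx₀ : 0 < x₀) (hy₀ : 0 < y₀) (hx₁ : 0 < x₁) (hy₁ : 0 < y₁) :
    0 ≤ bellmanDefect q r M x₀ y₀ x₁ y₁ :=
  le_trans (by positivity) (sq_sub_mul_half_rpow_le_bellmanDefect hqr hq hM hx₀ hy₀ hx₁ hy₁)

lemma quarter_le_half_rpow_mul_two_mul_rpow {y : ℝ} (hy : 0 < y) (hr : 1 ≤ r) :
    1 / 4 ≤ (y / 2) ^ (2 - r) * (2 * y) ^ (r - 2) := by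
  have hratio : (y / 2) ^ (2 - r) * (2 * y) ^ (r - 2) = (4⁻¹ : ℝ) ^ (2 - r) := by
    rw [show r - 2 = -(2 - r) by ring, Real.rpow_neg (by positivity), ← div_eq_mul_inv,
      ← Real.div_rpow (by positivity) (by positivity)]
    congr 1
    field_simp
    norm_num
  rw [hratio]
  calc (1 / 4 : ℝ) = 4⁻¹ ^ (1 : ℝ) := by norm_num
    _ ≤ 4⁻¹ ^ (2 - r) :=
      Real.rpow_le_rpow_of_exponent_ge (by norm_num) (by norm_num) (by linarith)

lemma mul_le_of_quarter_le_mul {A D U Z : ℝ} (hU : 0 ≤ U) (hZ : 0 ≤ Z) (hUZ : 1 / 4 ≤ U * Z) :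
    A * D ≤ A ^ 2 * U + Z * D ^ 2 := by
  refine le_of_sq_le_sq ?_ (by positivity)
  nlinarith [sq_nonneg (A ^ 2 * U - Z * D ^ 2),
    mul_nonneg (mul_nonneg (sq_nonneg A) (sq_nonneg D)) (sub_nonneg.2 hUZ)]

variable {x₂ y₂ : ℝ}

lemma abs_sub_mul_abs_sub_le_bellmanDefect_of_le (hqr : q.HolderConjugate r) (hq : 2 ≤ q)
    (hM : 17 ≤ M * (r * (r - 1))) (hx₀ : 0 < x₀) (hy₀ : 0 < y₀) (hx₁ : 0 < x₁) (hy₁ : 0 < y₁)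
    (hx₂ : 0 < x₂) (hy₂ : 0 < y₂) (hle : y₂ ≤ 2 * y₀) :
    |x₁ - x₀| * |y₂ - y₀| ≤
      8 * (bellmanDefect q r M x₀ y₀ x₁ y₁ + bellmanDefect q r M x₀ y₀ x₂ y₂) := by
  have hr2 := le_two_of_holderConjugate hqr hq
  have hE₁ := sq_sub_mul_half_rpow_le_bellmanDefect hqr hq hM hx₀ hy₀ hx₁ hy₁
  have hE₂ := max_rpow_mul_sq_sub_le_bellmanDefect hqr hq hM hx₀ hy₀ hx₂ hy₂
  have hmax : (2 * y₀) ^ (r - 2) * (y₂ - y₀) ^ 2 ≤ max y₀ y₂ ^ (r - 2) * (y₂ - y₀) ^ 2 := by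
    gcongr ?_ * _
    exact Real.rpow_le_rpow_of_nonpos (by positivity) (max_le (by linarith) hle) (by linarith)
  have hprod := mul_le_of_quarter_le_mul (A := |x₁ - x₀|) (D := |y₂ - y₀|)
    (by positivity) (by positivity) (quarter_le_half_rpow_mul_two_mul_rpow hy₀ hqr.symm.lt.le)
  rw [sq_abs, sq_abs] at hprod
  linarith

lemma rpow_abs_sub_le_bellmanDefect (hqr : q.HolderConjugate r) (hq : 2 ≤ q)
    (hM : 17 ≤ M * (r * (r - 1)))
    (hx₀ : 0 < x₀) (hy₀ : 0 < y₀) (hx₁ : 0 < x₁) (hy₁ : 0 < y₁) :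
    |x₁ - x₀| ^ q ≤ 8 * 4 ^ q * bellmanDefect q r M x₀ y₀ x₁ y₁ := by
  have hq0 : 0 < q := by linarith
  have hE := sq_sub_mul_quarter_rpow_le_bellmanDefect hqr hq hM hx₀ hy₀ hx₁ hy₁
  have hE0 := bellmanDefect_nonneg hqr hq hM hx₀ hy₀ hx₁ hy₁
  rw [← sq_abs] at hE
  set A := |x₁ - x₀|
  have hA0 : 0 ≤ A := abs_nonneg _
  rcases hA0.eq_or_lt with hA | hA
  · rw [← hA, Real.zero_rpow hq0.ne']; positivity
  calc A ^ q = 4 ^ (q - 2) * (A ^ 2 * (A / 4) ^ (q - 2)) := by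
        rw [Real.div_rpow hA.le (by norm_num), Real.rpow_sub hA, Real.rpow_two]
        field_simp
    _ ≤ 4 ^ q * (8 * bellmanDefect q r M x₀ y₀ x₁ y₁) := by
        exact mul_le_mul (Real.rpow_le_rpow_of_exponent_le (by norm_num) (by linarith))
          (by linarith) (by positivity) (by positivity)
    _ = _ := by ring

lemma rpow_abs_sub_le_bellmanDefect_of_lt (hqr : q.HolderConjugate r) (hq : 2 ≤ q)
    (hM : 17 ≤ M * (r * (r - 1))) (hx₀ : 0 < x₀) (hy₀ : 0 < y₀) (hx₁ : 0 < x₁) (hy₁ : 0 < y₁)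
    (hlt : 2 * y₀ < y₁) :
    |y₁ - y₀| ^ r ≤ 16 * bellmanDefect q r M x₀ y₀ x₁ y₁ := by
  have hr2 := le_two_of_holderConjugate hqr hq
  have hE := max_rpow_mul_sq_sub_le_bellmanDefect hqr hq hM hx₀ hy₀ hx₁ hy₁
  rw [max_eq_right (by linarith : y₀ ≤ y₁)] at hE
  rw [abs_of_pos (by linarith : 0 < y₁ - y₀)]
  set D := y₁ - y₀
  have hD0 : 0 < D := by linarith
  have htwo : (1 / 2 : ℝ) ≤ 2 ^ (r - 2) := by
    calc (1 / 2 : ℝ) = 2 ^ (-1 : ℝ) := by rw [Real.rpow_neg_one]; norm_num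
      _ ≤ _ := Real.rpow_le_rpow_of_exponent_le (by norm_num) (by linarith [hqr.symm.lt])
  have hmono : (2 * D) ^ (r - 2) ≤ y₁ ^ (r - 2) :=
    Real.rpow_le_rpow_of_nonpos (by positivity) (by linarith) (by linarith)
  have hhalf : 1 / 2 * D ^ r ≤ y₁ ^ (r - 2) * D ^ 2 := by
    calc 1 / 2 * D ^ r ≤ 2 ^ (r - 2) * D ^ r := by gcongr
      _ = (2 * D) ^ (r - 2) * D ^ 2 := by
          rw [Real.mul_rpow (by norm_num) hD0.le, mul_assoc, ← Real.rpow_two, ← Real.rpow_add hD0]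
          simp
      _ ≤ y₁ ^ (r - 2) * D ^ 2 := by gcongr
  linarith

lemma abs_sub_mul_abs_sub_le_bellmanDefect (hqr : q.HolderConjugate r) (hq : 2 ≤ q)
    (hM : 17 ≤ M * (r * (r - 1))) (hx₀ : 0 < x₀) (hy₀ : 0 < y₀) (hx₁ : 0 < x₁) (hy₁ : 0 < y₁)
    (hx₂ : 0 < x₂) (hy₂ : 0 < y₂) :
    |x₁ - x₀| * |y₂ - y₀| ≤
      16 * 4 ^ q * (bellmanDefect q r M x₀ y₀ x₁ y₁ + bellmanDefect q r M x₀ y₀ x₂ y₂) := by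
  have hE₁ := bellmanDefect_nonneg hqr hq hM hx₀ hy₀ hx₁ hy₁
  have hE₂ := bellmanDefect_nonneg hqr hq hM hx₀ hy₀ hx₂ hy₂
  have h4q : (1 : ℝ) ≤ 4 ^ q := Real.one_le_rpow (by norm_num) (by linarith)
  rcases le_or_gt y₂ (2 * y₀) with hle | hlt
  · refine (abs_sub_mul_abs_sub_le_bellmanDefect_of_le
      hqr hq hM hx₀ hy₀ hx₁ hy₁ hx₂ hy₂ hle).trans ?_
    gcongr
    linarith
  · have hA := rpow_abs_sub_le_bellmanDefect hqr hq hM hx₀ hy₀ hx₁ hy₁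
    have hD := rpow_abs_sub_le_bellmanDefect_of_lt hqr hq hM hx₀ hy₀ hx₂ hy₂ hlt
    calc |x₁ - x₀| * |y₂ - y₀|
        ≤ |x₁ - x₀| ^ q / q + |y₂ - y₀| ^ r / r :=
          Real.young_inequality_of_nonneg (abs_nonneg _) (abs_nonneg _) hqr
      _ ≤ |x₁ - x₀| ^ q + |y₂ - y₀| ^ r := by
          gcongr
          · exact div_le_self (by positivity) hqr.lt.le
          · exact div_le_self (by positivity) hqr.symm.lt.le
      _ ≤ _ := by nlinarith

end BellmanDefect

section BellmanFunction

variable {q r : ℝ}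

/-- `B` is a Bellman function for the exponents `q, r` and averages over `ι`: a nonnegative
function of size `x ^ q + y ^ r` on the quadrant, whose Jensen gap controls products of
oscillations. -/
structure IsBellmanFunction (ι : Type*) [Fintype ι] (q r C : ℝ) (B : ℝ → ℝ → ℝ) : Prop where
  continuous : Continuous fun z : ℝ × ℝ => B z.1 z.2
  nonneg : ∀ {x y : ℝ}, 0 ≤ x → 0 ≤ y → 0 ≤ B x y
  le : ∀ {x y : ℝ}, 0 ≤ x → 0 ≤ y → B x y ≤ C * (x ^ q + y ^ r)
  oscillation_le : ∀ x y : ι → ℝ, (∀ i, 0 ≤ x i) → (∀ i, 0 ≤ y i) → ∀ i i' k k',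
    |x i - x i'| * |y k - y k'| ≤ (Fintype.card ι : ℝ)⁻¹ * ∑ l, B (x l) (y l)
      - B ((Fintype.card ι : ℝ)⁻¹ * ∑ l, x l) ((Fintype.card ι : ℝ)⁻¹ * ∑ l, y l)

variable {ι : Type*} [Fintype ι]

lemma IsBellmanFunction.swap {C : ℝ} {B : ℝ → ℝ → ℝ} (hB : IsBellmanFunction ι q r C B) :
    IsBellmanFunction ι r q C fun x y => B y x where
  continuous := hB.continuous.comp continuous_swap
  nonneg hx hy := hB.nonneg hy hx
  le hx hy := by rw [add_comm]; exact hB.le hy hx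
  oscillation_le x y hx hy i i' k k' := by
    rw [mul_comm]; exact hB.oscillation_le y x hy hx k k' i i'

lemma sum_bellmanDeriv_sub_mean [Nonempty ι] (M : ℝ) (x y : ι → ℝ) (X Y : ℝ)
    (hX : X = (Fintype.card ι : ℝ)⁻¹ * ∑ l, x l) (hY : Y = (Fintype.card ι : ℝ)⁻¹ * ∑ l, y l) :
    ∑ l, bellmanDeriv q r M X Y (x l - X) (y l - Y) = 0 := by
  have hcard : (Fintype.card ι : ℝ) ≠ 0 := Nat.cast_ne_zero.2 Fintype.card_ne_zero
  have hx : ∑ l, (x l - X) = 0 := by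
    rw [sum_sub_distrib, sum_const, card_univ, nsmul_eq_mul, hX]; field_simp; simp
  have hy : ∑ l, (y l - Y) = 0 := by
    rw [sum_sub_distrib, sum_const, card_univ, nsmul_eq_mul, hY]; field_simp; simp
  have hlinear : ∑ l, bellmanDeriv q r M X Y (x l - X) (y l - Y)
      = bellmanDeriv q r M X Y (∑ l, (x l - X)) (∑ l, (y l - Y)) := by
    simp only [bellmanDeriv, powSumDeriv, sum_add_distrib, mul_sum, mul_add, sum_mul]
  rw [hlinear, hx, hy]
  simp [bellmanDeriv, powSumDeriv]

variable {M : ℝ}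

lemma bellman_oscillation_le_of_pos (hqr : q.HolderConjugate r) (hq : 2 ≤ q)
    (hM : 17 ≤ M * (r * (r - 1))) {x y : ι → ℝ} (hx : ∀ i, 0 < x i) (hy : ∀ i, 0 < y i)
    (i i' k k' : ι) :
    |x i - x i'| * |y k - y k'| ≤ 128 * 4 ^ q * Fintype.card ι *
      ((Fintype.card ι : ℝ)⁻¹ * ∑ l, bellman q r M (x l) (y l)
        - bellman q r M ((Fintype.card ι : ℝ)⁻¹ * ∑ l, x l)
          ((Fintype.card ι : ℝ)⁻¹ * ∑ l, y l)) := by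
  have : Nonempty ι := ⟨i⟩
  have hcard : 0 < (Fintype.card ι : ℝ) := Nat.cast_pos.2 Fintype.card_pos
  obtain ⟨X, hX⟩ : ∃ X, X = (Fintype.card ι : ℝ)⁻¹ * ∑ l, x l := ⟨_, rfl⟩
  obtain ⟨Y, hY⟩ : ∃ Y, Y = (Fintype.card ι : ℝ)⁻¹ * ∑ l, y l := ⟨_, rfl⟩
  have hX0 : 0 < X := hX ▸ mul_pos (inv_pos.2 hcard) (sum_pos (fun i _ => hx i) univ_nonempty)
  have hY0 : 0 < Y := hY ▸ mul_pos (inv_pos.2 hcard) (sum_pos (fun i _ => hy i) univ_nonempty)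
  set E : ι → ℝ := fun l => bellmanDefect q r M X Y (x l) (y l) with hE
  have hE0 (l) : 0 ≤ E l := bellmanDefect_nonneg hqr hq hM hX0 hY0 (hx l) (hy l)
  have hgap : ∑ l, E l
      = ∑ l, bellman q r M (x l) (y l) - Fintype.card ι * bellman q r M X Y := by
    simp only [hE, bellmanDefect, sum_sub_distrib, sum_bellmanDeriv_sub_mean M x y X Y hX hY]
    simp
  have hpair (i k) : |x i - X| * |y k - Y| ≤ 16 * 4 ^ q * (2 * ∑ l, E l) := by
    have hi : E i ≤ ∑ l, E l := single_le_sum (fun l _ => hE0 l) (mem_univ i)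
    have hk : E k ≤ ∑ l, E l := single_le_sum (fun l _ => hE0 l) (mem_univ k)
    refine (abs_sub_mul_abs_sub_le_bellmanDefect
      hqr hq hM hX0 hY0 (hx i) (hy i) (hx k) (hy k)).trans ?_
    gcongr
    linarith
  have hxtri : |x i - x i'| ≤ |x i - X| + |x i' - X| := by
    rw [abs_sub_comm (x i')]; exact abs_sub_le _ _ _
  have hytri : |y k - y k'| ≤ |y k - Y| + |y k' - Y| := by
    rw [abs_sub_comm (y k')]; exact abs_sub_le _ _ _
  rw [← hX, ← hY]
  calc |x i - x i'| * |y k - y k'|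
      ≤ (|x i - X| + |x i' - X|) * (|y k - Y| + |y k' - Y|) := by gcongr
    _ ≤ 128 * 4 ^ q * ∑ l, E l := by linarith [hpair i k, hpair i k', hpair i' k, hpair i' k']
    _ = _ := by rw [hgap]; field_simp

lemma continuous_bellman (hq : 2 ≤ q) (hr : 0 ≤ r) :
    Continuous fun z : ℝ × ℝ => bellman q r M z.1 z.2 := by
  have hx : Continuous fun z : ℝ × ℝ => z.1 ^ q :=
    continuous_fst.rpow_const fun _ => Or.inr (by linarith)
  have hy : Continuous fun z : ℝ × ℝ => z.2 ^ r := continuous_snd.rpow_const fun _ => Or.inr hr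
  exact (hy.const_mul M).add ((continuous_fst.pow 2).mul
    ((hx.add hy).rpow_const fun _ => Or.inr (one_sub_two_div_nonneg hq)))

lemma bellman_oscillation_le (hqr : q.HolderConjugate r) (hq : 2 ≤ q)
    (hM : 17 ≤ M * (r * (r - 1))) {x y : ι → ℝ} (hx : ∀ i, 0 ≤ x i) (hy : ∀ i, 0 ≤ y i)
    (i i' k k' : ι) :
    |x i - x i'| * |y k - y k'| ≤ 128 * 4 ^ q * Fintype.card ι *
      ((Fintype.card ι : ℝ)⁻¹ * ∑ l, bellman q r M (x l) (y l)
        - bellman q r M ((Fintype.card ι : ℝ)⁻¹ * ∑ l, x l)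
          ((Fintype.card ι : ℝ)⁻¹ * ∑ l, y l)) := by
  have hB : Continuous fun z : ℝ × ℝ => bellman q r M z.1 z.2 :=
    continuous_bellman hq hqr.symm.pos.le
  set gap : ℝ → ℝ := fun ε => 128 * 4 ^ q * Fintype.card ι *
    ((Fintype.card ι : ℝ)⁻¹ * ∑ l, bellman q r M (x l + ε) (y l + ε)
      - bellman q r M ((Fintype.card ι : ℝ)⁻¹ * ∑ l, (x l + ε))
          ((Fintype.card ι : ℝ)⁻¹ * ∑ l, (y l + ε))) with hgap
  have hpos : ∀ ε ∈ Set.Ioi (0 : ℝ), |x i - x i'| * |y k - y k'| ≤ gap ε := fun ε hε => by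
    simpa using bellman_oscillation_le_of_pos hqr hq hM
      (fun l => add_pos_of_nonneg_of_pos (hx l) hε)
      (fun l => add_pos_of_nonneg_of_pos (hy l) hε) i i' k k'
  have hcont : Continuous gap :=
    continuous_const.mul ((continuous_const.mul (continuous_finsetSum _ fun l _ =>
        hB.comp (f := fun ε : ℝ => (x l + ε, y l + ε)) (by fun_prop))).sub
      (hB.comp (f := fun ε : ℝ => ((Fintype.card ι : ℝ)⁻¹ * ∑ l, (x l + ε),
        (Fintype.card ι : ℝ)⁻¹ * ∑ l, (y l + ε))) (by fun_prop)))
  have hlim := (hcont.tendsto 0).mono_left (nhdsWithin_le_nhds (s := Set.Ioi (0 : ℝ)))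
  simpa [hgap] using ge_of_tendsto hlim (Filter.eventually_of_mem self_mem_nhdsWithin hpos)

lemma isBellmanFunction_bellman (ι : Type*) [Fintype ι] (hqr : q.HolderConjugate r) (hq : 2 ≤ q)
    (hM0 : 0 ≤ M) (hM : 17 ≤ M * (r * (r - 1))) :
    IsBellmanFunction ι q r (128 * 4 ^ q * Fintype.card ι * (M + 1))
      fun x y => 128 * 4 ^ q * Fintype.card ι * bellman q r M x y where
  continuous := (continuous_bellman hq hqr.symm.pos.le).const_mul _
  nonneg hx hy := by unfold bellman powSum; positivity
  le {x y} hx hy := by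
    have hxq : 0 ≤ x ^ q := by positivity
    rw [mul_assoc (128 * 4 ^ q * (Fintype.card ι : ℝ))]
    refine mul_le_mul_of_nonneg_left ?_ (by positivity)
    have := sq_mul_powSum_rpow_le (r := r) hq hx hy
    unfold bellman
    unfold powSum at *
    linarith [mul_nonneg hM0 hxq]
  oscillation_le x y hx hy i i' k k' := by
    refine (bellman_oscillation_le hqr hq hM hx hy i i' k k').trans_eq ?_
    rw [← mul_sum]
    ring

lemma exists_isBellmanFunction (ι : Type*) [Fintype ι] (hqr : q.HolderConjugate r) :
    ∃ C B, 0 ≤ C ∧ IsBellmanFunction ι q r C B := by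
  wlog hq : 2 ≤ q generalizing q r
  · have hr : 2 ≤ r := by nlinarith [hqr.mul_eq_add, hqr.lt, hqr.symm.lt]
    obtain ⟨C, B, hC, hB⟩ := this hqr.symm hr
    exact ⟨C, _, hC, hB.swap⟩
  have hr : 0 < r * (r - 1) := mul_pos hqr.symm.pos (sub_pos.2 hqr.symm.lt)
  exact ⟨_, _, by positivity, isBellmanFunction_bellman ι hqr hq (M := 17 / (r * (r - 1)))
    (by positivity) (by rw [div_mul_cancel₀ _ hr.ne'])⟩

end BellmanFunction

/-- Continuity together with compact support: all integrals of the discrete argument below are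
taken over functions of this class. -/
def IsCc {E F : Type*} [TopologicalSpace E] [TopologicalSpace F] [Zero F] (f : E → F) : Prop :=
  Continuous f ∧ HasCompactSupport f

namespace IsCc

section TopologicalSpace

variable {E F F' G : Type*} [TopologicalSpace E] [TopologicalSpace F] [Zero F]
  [TopologicalSpace F'] [Zero F'] [TopologicalSpace G] [Zero G] {f : E → F} {f' : E → F'}

lemma comp_left (h : IsCc f) {g : F → G} (hg : Continuous g) (h0 : g 0 = 0) :
    IsCc fun x => g (f x) :=
  ⟨hg.comp h.1, h.2.comp_left h0⟩

lemma comp₂_left (h : IsCc f) (h' : IsCc f') {g : F → F' → G}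
    (hg : Continuous fun z : F × F' => g z.1 z.2) (h0 : g 0 0 = 0) :
    IsCc fun x => g (f x) (f' x) :=
  ⟨hg.comp (h.1.prodMk h'.1), h.2.comp₂_left h'.2 h0⟩

lemma rpow {f : E → ℝ} (hf : IsCc f) {q : ℝ} (hq : 0 < q) : IsCc fun x => f x ^ q :=
  hf.comp_left (Real.continuous_rpow_const hq.le) (Real.zero_rpow hq.ne')

end TopologicalSpace

section NormedAddCommGroup

variable {E F ι : Type*} [TopologicalSpace E] [NormedAddCommGroup F] {f g : E → F}

lemma add (hf : IsCc f) (hg : IsCc g) : IsCc fun x => f x + g x :=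
  hf.comp₂_left hg (g := (· + ·)) continuous_add (add_zero 0)

lemma sub (hf : IsCc f) (hg : IsCc g) : IsCc fun x => f x - g x :=
  hf.comp₂_left hg (g := (· - ·)) continuous_sub (sub_zero 0)

lemma norm (hf : IsCc f) : IsCc fun x => ‖f x‖ :=
  hf.comp_left continuous_norm norm_zero

lemma sum {f : ι → E → F} (t : Finset ι) (hf : ∀ i, IsCc (f i)) : IsCc fun x => ∑ i ∈ t, f i x := by
  classical
  induction t using Finset.induction_on with
  | empty => simpa using ⟨continuous_const, HasCompactSupport.zero⟩
  | insert a t ha ih => simpa only [sum_insert ha] using (hf a).add ih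

lemma integrable [MeasurableSpace E] [OpensMeasurableSpace E] {μ : Measure E}
    [IsFiniteMeasureOnCompacts μ] (hf : IsCc f) : Integrable f μ :=
  hf.1.integrable_of_hasCompactSupport hf.2

end NormedAddCommGroup

section NormedRing

variable {E R : Type*} [TopologicalSpace E] [NormedRing R] {f g : E → R}

lemma mul (hf : IsCc f) (hg : IsCc g) : IsCc fun x => f x * g x :=
  hf.comp₂_left hg (g := (· * ·)) continuous_mul (mul_zero 0)

lemma const_mul (hf : IsCc f) (c : R) : IsCc fun x => c * f x :=
  hf.comp_left (continuous_const_mul c) (mul_zero c)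

end NormedRing

end IsCc

section Shift

variable {𝕜 E ι : Type*} [Fintype ι]

/-- The translation operator `f ↦ f (· + v)`. -/
def shift (𝕜 : Type*) {E : Type*} [CommSemiring 𝕜] [Add E] (v : E) : Module.End 𝕜 (E → 𝕜) :=
  LinearMap.funLeft 𝕜 𝕜 (· + v)

@[simp] lemma shift_apply [CommSemiring 𝕜] [Add E] (v : E) (f : E → 𝕜) (x : E) :
    shift 𝕜 v f x = f (x + v) :=
  rfl

lemma shift_commute [CommSemiring 𝕜] [AddCommSemigroup E] (v w : E) :
    Commute (shift 𝕜 v) (shift 𝕜 w) := by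
  ext f x
  simp [add_right_comm]

/-- The difference operator `f ↦ f (· + v) - f (· + w)`. -/
def shiftDiff (𝕜 : Type*) {E : Type*} [CommRing 𝕜] [Add E] (v w : E) : Module.End 𝕜 (E → 𝕜) :=
  shift 𝕜 v - shift 𝕜 w

@[simp] lemma shiftDiff_apply [CommRing 𝕜] [Add E] (v w : E) (f : E → 𝕜) (x : E) :
    shiftDiff 𝕜 v w f x = f (x + v) - f (x + w) :=
  rfl

/-- The averaging operator over the translations in the family `s`: one step of a random walk. -/
def shiftMean (𝕜 : Type*) {E : Type*} [Field 𝕜] [Add E] (s : ι → E) : Module.End 𝕜 (E → 𝕜) :=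
  (Fintype.card ι : 𝕜)⁻¹ • ∑ i, shift 𝕜 (s i)

@[simp] lemma shiftMean_apply [Field 𝕜] [Add E] (s : ι → E) (f : E → 𝕜) (x : E) :
    shiftMean 𝕜 s f x = (Fintype.card ι : 𝕜)⁻¹ * ∑ i, f (x + s i) := by
  simp [shiftMean]

lemma shift_commute_shiftMean [Field 𝕜] [AddCommSemigroup E] (v : E) (s : ι → E) :
    Commute (shift 𝕜 v) (shiftMean 𝕜 s) :=
  (Commute.sum_right _ _ _ fun i _ => shift_commute v (s i)).smul_right _

lemma shiftMean_pow_succ_apply [Field 𝕜] [Add E] (s : ι → E) (j : ℕ) (f : E → 𝕜) :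
    (shiftMean 𝕜 s ^ (j + 1)) f = shiftMean 𝕜 s ((shiftMean 𝕜 s ^ j) f) := by
  rw [pow_succ', Module.End.mul_apply]

lemma shiftMean_pow_nonneg [Add E] (s : ι → E) {F : E → ℝ} (hF : ∀ x, 0 ≤ F x) (j : ℕ) (x : E) :
    0 ≤ (shiftMean ℝ s ^ j) F x := by
  induction j generalizing x with
  | zero => exact hF x
  | succ j ih =>
    rw [shiftMean_pow_succ_apply, shiftMean_apply]
    exact mul_nonneg (by positivity) (sum_nonneg fun i _ => ih _)

variable [TopologicalSpace E] [AddGroup E] [IsTopologicalAddGroup E] [NormedField 𝕜] {f : E → 𝕜}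

lemma IsCc.shift (hf : IsCc f) (v : E) : IsCc (shift 𝕜 v f) :=
  ⟨hf.1.comp (continuous_add_const v), hf.2.comp_homeomorph (Homeomorph.addRight v)⟩

lemma IsCc.shiftDiff (hf : IsCc f) (v w : E) : IsCc (shiftDiff 𝕜 v w f) :=
  (hf.shift v).sub (hf.shift w)

lemma IsCc.shiftMean (hf : IsCc f) (s : ι → E) : IsCc (shiftMean 𝕜 s f) := by
  rw [funext (shiftMean_apply s f)]
  exact (IsCc.sum univ fun i => hf.shift (s i)).const_mul _

lemma IsCc.shiftMean_pow (hf : IsCc f) (s : ι → E) (j : ℕ) :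
    IsCc ((_root_.shiftMean 𝕜 s ^ j) f) := by
  induction j with
  | zero => exact hf
  | succ j ih => rw [shiftMean_pow_succ_apply]; exact ih.shiftMean s

lemma integral_shiftMean [Nonempty ι] {𝕜 : Type*} [RCLike 𝕜] {f : E → 𝕜} [MeasurableSpace E]
    [BorelSpace E] {μ : Measure E} [IsFiniteMeasureOnCompacts μ] [μ.IsAddRightInvariant]
    (hf : IsCc f) (s : ι → E) : ∫ x, shiftMean 𝕜 s f x ∂μ = ∫ x, f x ∂μ := by
  have hint (i) : Integrable (fun x => f (x + s i)) μ := (hf.shift (s i)).integrable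
  simp only [shiftMean_apply]
  rw [integral_const_mul, integral_finsetSum _ fun i _ => hint i]
  simp [integral_add_right_eq_self f]

end Shift

section QuadrantPart

/-- The coefficients of a complex number in its decomposition into `quadrantPart`s. -/
def quadrantUnit : Fin 4 → ℂ := ![1, -1, Complex.I, -Complex.I]

/-- The positive and negative parts of the real and imaginary parts of `z`, which reduce estimates
for complex functions to nonnegative ones. -/
def quadrantPart (z : ℂ) : Fin 4 → ℝ := ![max z.re 0, max (-z.re) 0, max z.im 0, max (-z.im) 0]

lemma sum_quadrantUnit_mul_quadrantPart (z : ℂ) :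
    ∑ k, quadrantUnit k * (quadrantPart z k : ℂ) = z := by
  have hparts (a : ℝ) : max a 0 + -max (-a) 0 = a := by
    rw [← sub_eq_add_neg, max_zero_sub_max_neg_zero_eq_self]
  simp only [Fin.sum_univ_four, quadrantUnit, quadrantPart]
  apply Complex.ext
  · simpa using hparts z.re
  · simpa using hparts z.im

lemma norm_quadrantUnit (k : Fin 4) : ‖quadrantUnit k‖ = 1 := by
  fin_cases k <;> simp [quadrantUnit]

lemma quadrantPart_nonneg (z : ℂ) (k : Fin 4) : 0 ≤ quadrantPart z k := by
  fin_cases k <;> simp [quadrantPart]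

lemma quadrantPart_le_norm (z : ℂ) (k : Fin 4) : quadrantPart z k ≤ ‖z‖ := by
  have hre := abs_le.1 (Complex.abs_re_le_norm z)
  have him := abs_le.1 (Complex.abs_im_le_norm z)
  fin_cases k <;> simp [quadrantPart] <;> linarith [hre.1, hre.2, him.1, him.2]

lemma quadrantPart_zero (k : Fin 4) : quadrantPart 0 k = 0 := by
  fin_cases k <;> simp [quadrantPart]

lemma continuous_quadrantPart (k : Fin 4) : Continuous fun z => quadrantPart z k := by
  fin_cases k
  exacts [Complex.continuous_re.max continuous_const,
    Complex.continuous_re.neg.max continuous_const, Complex.continuous_im.max continuous_const,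
    Complex.continuous_im.neg.max continuous_const]

variable {E : Type*} [TopologicalSpace E]

lemma IsCc.quadrantPart {F : E → ℂ} (hF : IsCc F) (k : Fin 4) :
    IsCc fun x => quadrantPart (F x) k :=
  hF.comp_left (continuous_quadrantPart k) (quadrantPart_zero k)

lemma integral_quadrantPart_rpow_le [MeasurableSpace E] [OpensMeasurableSpace E] {μ : Measure E}
    [IsFiniteMeasureOnCompacts μ] {F : E → ℂ} (hF : IsCc F) {p : ℝ}
    (hp : 0 < p) (k : Fin 4) :
    ∫ x, quadrantPart (F x) k ^ p ∂μ ≤ ∫ x, ‖F x‖ ^ p ∂μ :=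
  integral_mono ((hF.quadrantPart k).rpow hp).integrable (hF.norm.rpow hp).integrable fun _ =>
    Real.rpow_le_rpow (quadrantPart_nonneg _ _) (quadrantPart_le_norm _ _) hp.le

end QuadrantPart

section Embedding

variable {ι E : Type*} [Fintype ι]

lemma shiftMean_pow_eq_sum_quadrantPart [Add E] (s : ι → E) (F : E → ℂ) (j : ℕ) (x : E) :
    (shiftMean ℂ s ^ j) F x = ∑ k, quadrantUnit k *
      (((shiftMean ℝ s ^ j) (fun y => quadrantPart (F y) k) x : ℝ) : ℂ) := by
  induction j generalizing x with
  | zero => exact (sum_quadrantUnit_mul_quadrantPart (F x)).symm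
  | succ j ih =>
    simp only [shiftMean_pow_succ_apply, shiftMean_apply, ih]
    rw [sum_comm, mul_sum]
    refine sum_congr rfl fun k _ => ?_
    rw [← mul_sum]
    push_cast
    ring

lemma norm_shiftDiff_shiftMean_pow_le [Add E] (s : ι → E) (v w : E) (F : E → ℂ) (j : ℕ) (x : E) :
    ‖shiftDiff ℂ v w ((shiftMean ℂ s ^ j) F) x‖ ≤
      ∑ m, |shiftDiff ℝ v w ((shiftMean ℝ s ^ j) fun y => quadrantPart (F y) m) x| := by
  simp only [shiftDiff_apply, shiftMean_pow_eq_sum_quadrantPart s F, ← sum_sub_distrib, ← mul_sub]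
  refine (norm_sum_le _ _).trans (sum_le_sum fun m _ => ?_)
  rw [norm_mul, norm_quadrantUnit, one_mul, ← Complex.ofReal_sub, Complex.norm_real,
    Real.norm_eq_abs]

variable [TopologicalSpace E] {q r C : ℝ} {B : ℝ → ℝ → ℝ}

lemma IsBellmanFunction.zero_zero (hB : IsBellmanFunction ι q r C B) (hq : 0 < q) (hr : 0 < r) :
    B 0 0 = 0 :=
  le_antisymm (by simpa [Real.zero_rpow hq.ne', Real.zero_rpow hr.ne'] using hB.le le_rfl le_rfl)
    (hB.nonneg le_rfl le_rfl)

lemma IsBellmanFunction.isCc_comp (hB : IsBellmanFunction ι q r C B) (hq : 0 < q) (hr : 0 < r)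
    {F G : E → ℝ} (hF : IsCc F) (hG : IsCc G) : IsCc fun x => B (F x) (G x) :=
  hF.comp₂_left hG hB.continuous (hB.zero_zero hq hr)

variable [AddCommGroup E] [IsTopologicalAddGroup E] [MeasurableSpace E] [BorelSpace E]
  {μ : Measure E} [IsFiniteMeasureOnCompacts μ] {s : ι → E}

lemma integral_norm_shiftDiff_mul_le {F G : E → ℂ} (hF : IsCc F) (hG : IsCc G) (v w v' w' : E)
    (j : ℕ) :
    ∫ x, ‖shiftDiff ℂ v w ((shiftMean ℂ s ^ j) F) x‖ *
        ‖shiftDiff ℂ v' w' ((shiftMean ℂ s ^ j) G) x‖ ∂μ ≤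
      ∑ m, ∑ l, ∫ x, |shiftDiff ℝ v w ((shiftMean ℝ s ^ j) fun y => quadrantPart (F y) m) x| *
        |shiftDiff ℝ v' w' ((shiftMean ℝ s ^ j) fun y => quadrantPart (G y) l) x| ∂μ := by
  have hosc {H : E → ℂ} (hH : IsCc H) (v w : E) (m : Fin 4) :
      IsCc fun x => |shiftDiff ℝ v w ((shiftMean ℝ s ^ j) fun y => quadrantPart (H y) m) x| :=
    (((hH.quadrantPart m).shiftMean_pow s j).shiftDiff v w).norm
  have hprod (m l : Fin 4) := (hosc hF v w m).mul (hosc hG v' w' l)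
  simp_rw [← integral_finsetSum univ fun l _ => (hprod _ l).integrable,
    ← integral_finsetSum univ fun m _ => (IsCc.sum univ (hprod m)).integrable]
  refine integral_mono (((hF.shiftMean_pow s j).shiftDiff v w).norm.mul
      ((hG.shiftMean_pow s j).shiftDiff v' w').norm).integrable
    (IsCc.sum univ fun m => IsCc.sum univ (hprod m)).integrable fun x => ?_
  simp only [← sum_mul_sum]
  exact mul_le_mul (norm_shiftDiff_shiftMean_pow_le s v w F j x)
    (norm_shiftDiff_shiftMean_pow_le s v' w' G j x) (norm_nonneg _)
    (sum_nonneg fun _ _ => abs_nonneg _)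

variable [μ.IsAddRightInvariant]

namespace IsBellmanFunction

variable {F G : E → ℝ}

lemma integral_shiftDiff_mul_le (hB : IsBellmanFunction ι q r C B) (hq : 0 < q) (hr : 0 < r)
    (hF : IsCc F) (hG : IsCc G) (hF0 : ∀ x, 0 ≤ F x) (hG0 : ∀ x, 0 ≤ G x) (i i' k k' : ι) :
    ∫ x, |shiftDiff ℝ (s i) (s i') F x| * |shiftDiff ℝ (s k) (s k') G x| ∂μ ≤
      ∫ x, B (F x) (G x) ∂μ - ∫ x, B (shiftMean ℝ s F x) (shiftMean ℝ s G x) ∂μ := by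
  have : Nonempty ι := ⟨i⟩
  have hBFG := hB.isCc_comp hq hr hF hG
  have hmeanB := hB.isCc_comp hq hr (hF.shiftMean s) (hG.shiftMean s)
  have hBmean := hBFG.shiftMean s
  rw [← integral_shiftMean hBFG s, ← integral_sub hBmean.integrable hmeanB.integrable]
  refine integral_mono ((hF.shiftDiff _ _).norm.mul (hG.shiftDiff _ _).norm).integrable
    (hBmean.sub hmeanB).integrable fun x => ?_
  simpa using hB.oscillation_le (fun l => F (x + s l)) (fun l => G (x + s l))
    (fun _ => hF0 _) (fun _ => hG0 _) i i' k k'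

lemma sum_integral_shiftDiff_mul_add_le (hB : IsBellmanFunction ι q r C B) (hq : 0 < q)
    (hr : 0 < r) (hF : IsCc F) (hG : IsCc G) (hF0 : ∀ x, 0 ≤ F x) (hG0 : ∀ x, 0 ≤ G x)
    (i i' k k' : ι) (K : ℕ) :
    ∑ j ∈ range K, ∫ x, |shiftDiff ℝ (s i) (s i') ((shiftMean ℝ s ^ j) F) x| *
        |shiftDiff ℝ (s k) (s k') ((shiftMean ℝ s ^ j) G) x| ∂μ
      + ∫ x, B ((shiftMean ℝ s ^ K) F x) ((shiftMean ℝ s ^ K) G x) ∂μ ≤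
      ∫ x, B (F x) (G x) ∂μ := by
  induction K with
  | zero => simp
  | succ K ih =>
    have hstep := hB.integral_shiftDiff_mul_le (μ := μ) (s := s) hq hr (hF.shiftMean_pow s K)
      (hG.shiftMean_pow s K) (shiftMean_pow_nonneg s hF0 K) (shiftMean_pow_nonneg s hG0 K) i i' k k'
    rw [sum_range_succ, shiftMean_pow_succ_apply, shiftMean_pow_succ_apply]
    linarith

lemma sum_integral_shiftDiff_mul_le (hB : IsBellmanFunction ι q r C B) (hq : 0 < q)
    (hr : 0 < r) (hF : IsCc F) (hG : IsCc G) (hF0 : ∀ x, 0 ≤ F x) (hG0 : ∀ x, 0 ≤ G x)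
    (i i' k k' : ι) (K : ℕ) :
    ∑ j ∈ range K, ∫ x, |shiftDiff ℝ (s i) (s i') ((shiftMean ℝ s ^ j) F) x| *
        |shiftDiff ℝ (s k) (s k') ((shiftMean ℝ s ^ j) G) x| ∂μ ≤
      C * (∫ x, F x ^ q ∂μ + ∫ x, G x ^ r ∂μ) := by
  have hsize : ∫ x, B (F x) (G x) ∂μ ≤ C * (∫ x, F x ^ q ∂μ + ∫ x, G x ^ r ∂μ) := by
    rw [← integral_add (hF.rpow hq).integrable (hG.rpow hr).integrable, ← integral_const_mul]
    exact integral_mono (hB.isCc_comp hq hr hF hG).integrable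
      (((hF.rpow hq).add (hG.rpow hr)).const_mul _).integrable fun x => hB.le (hF0 x) (hG0 x)
  have hnonneg : 0 ≤ ∫ x, B ((shiftMean ℝ s ^ K) F x) ((shiftMean ℝ s ^ K) G x) ∂μ :=
    integral_nonneg fun x =>
      hB.nonneg (shiftMean_pow_nonneg s hF0 K x) (shiftMean_pow_nonneg s hG0 K x)
  linarith [hB.sum_integral_shiftDiff_mul_add_le (μ := μ) (s := s) hq hr hF hG hF0 hG0 i i' k k' K]

lemma sum_integral_norm_shiftDiff_mul_le (hB : IsBellmanFunction ι q r C B)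
    (hC : 0 ≤ C) (hq : 0 < q) (hr : 0 < r) {F G : E → ℂ} (hF : IsCc F) (hG : IsCc G)
    (i i' k k' : ι) (K : ℕ) :
    ∑ j ∈ range K, ∫ x, ‖shiftDiff ℂ (s i) (s i') ((shiftMean ℂ s ^ j) F) x‖ *
        ‖shiftDiff ℂ (s k) (s k') ((shiftMean ℂ s ^ j) G) x‖ ∂μ ≤
      16 * C * (∫ x, ‖F x‖ ^ q ∂μ + ∫ x, ‖G x‖ ^ r ∂μ) := by
  calc _ ≤ ∑ j ∈ range K, ∑ m, ∑ l,
        ∫ x, |shiftDiff ℝ (s i) (s i') ((shiftMean ℝ s ^ j) fun y => quadrantPart (F y) m) x| *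
          |shiftDiff ℝ (s k) (s k') ((shiftMean ℝ s ^ j) fun y => quadrantPart (G y) l) x| ∂μ :=
        sum_le_sum fun j _ => integral_norm_shiftDiff_mul_le hF hG _ _ _ _ j
    _ = ∑ m, ∑ l, ∑ j ∈ range K,
        ∫ x, |shiftDiff ℝ (s i) (s i') ((shiftMean ℝ s ^ j) fun y => quadrantPart (F y) m) x| *
          |shiftDiff ℝ (s k) (s k') ((shiftMean ℝ s ^ j) fun y => quadrantPart (G y) l) x| ∂μ := by
        rw [sum_comm]
        exact sum_congr rfl fun m _ => sum_comm
    _ ≤ ∑ _m : Fin 4, ∑ _l : Fin 4, C * (∫ x, ‖F x‖ ^ q ∂μ + ∫ x, ‖G x‖ ^ r ∂μ) := by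
        refine sum_le_sum fun m _ => sum_le_sum fun l _ =>
          (hB.sum_integral_shiftDiff_mul_le hq hr (hF.quadrantPart m) (hG.quadrantPart l)
            (fun _ => quadrantPart_nonneg _ _) (fun _ => quadrantPart_nonneg _ _) i i' k k' K).trans
          ?_
        exact mul_le_mul_of_nonneg_left (add_le_add (integral_quadrantPart_rpow_le hF hq m)
          (integral_quadrantPart_rpow_le hG hr l)) hC
    _ = _ := by simp; ring

end IsBellmanFunction

end Embedding

section Transpose

lemma integral_shift_mul {E : Type*} [TopologicalSpace E] [AddGroup E] [ContinuousAdd E]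
    [MeasurableSpace E] [BorelSpace E] {μ : Measure E} [μ.IsAddRightInvariant] (v : E)
    (f g : E → ℂ) :
    ∫ x, shift ℂ v f x * g x ∂μ = ∫ x, f x * shift ℂ (-v) g x ∂μ := by
  rw [← integral_add_right_eq_self (fun x => f x * shift ℂ (-v) g x) v]
  simp

variable {E : Type*} [TopologicalSpace E] [AddGroup E] [IsTopologicalAddGroup E]
  [MeasurableSpace E] [BorelSpace E] {μ : Measure E} [IsFiniteMeasureOnCompacts μ]
  [μ.IsAddRightInvariant] {f g : E → ℂ}

lemma integral_shiftDiff_mul (hf : IsCc f) (hg : IsCc g) (v w : E) :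
    ∫ x, shiftDiff ℂ v w f x * g x ∂μ = ∫ x, f x * shiftDiff ℂ (-v) (-w) g x ∂μ := by
  simp only [shiftDiff, LinearMap.sub_apply, Pi.sub_apply, sub_mul, mul_sub]
  rw [integral_sub ((hf.shift v).mul hg).integrable ((hf.shift w).mul hg).integrable,
    integral_sub (hf.mul (hg.shift (-v))).integrable (hf.mul (hg.shift (-w))).integrable,
    integral_shift_mul, integral_shift_mul]

lemma integral_shiftMean_mul {ι : Type*} [Fintype ι] (hf : IsCc f) (hg : IsCc g) (s : ι → E) :
    ∫ x, shiftMean ℂ s f x * g x ∂μ = ∫ x, f x * shiftMean ℂ (fun i => -s i) g x ∂μ := by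
  simp only [shiftMean_apply, mul_assoc, mul_left_comm _ (Fintype.card ι : ℂ)⁻¹, integral_const_mul]
  congr 1
  simp only [sum_mul, mul_sum]
  refine (integral_finsetSum _ fun i _ => ((hf.shift (s i)).mul hg).integrable).trans ?_
  refine .trans ?_ (integral_finsetSum _ fun i _ => (hf.mul (hg.shift (-s i))).integrable).symm
  exact sum_congr rfl fun i _ => integral_shift_mul (s i) f g

end Transpose

section NormInequalities

variable {q : ℝ}

lemma norm_add_rpow_le {V : Type*} [SeminormedAddCommGroup V] (hq : 1 ≤ q) (a b : V) :
    ‖a + b‖ ^ q ≤ 2 ^ (q - 1) * (‖a‖ ^ q + ‖b‖ ^ q) :=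
  (Real.rpow_le_rpow (norm_nonneg _) (norm_add_le a b) (by linarith)).trans
    (by exact_mod_cast NNReal.rpow_add_le_mul_rpow_add_rpow ‖a‖₊ ‖b‖₊ hq)

lemma norm_shiftMean_rpow_le {ι E : Type*} [Fintype ι] [Nonempty ι] [AddGroup E] (hq : 1 ≤ q)
    (s : ι → E) (f : E → ℂ) (x : E) :
    ‖shiftMean ℂ s f x‖ ^ q ≤ shiftMean ℝ s (fun y => ‖f y‖ ^ q) x := by
  have hcard : (Fintype.card ι : ℝ) ≠ 0 := Nat.cast_ne_zero.2 Fintype.card_ne_zero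
  have hnorm : ‖shiftMean ℂ s f x‖ ≤ ∑ i, (Fintype.card ι : ℝ)⁻¹ * ‖f (x + s i)‖ := by
    rw [shiftMean_apply, norm_mul, norm_inv, Complex.norm_natCast, ← mul_sum]
    gcongr
    exact norm_sum_le _ _
  calc ‖shiftMean ℂ s f x‖ ^ q ≤ (∑ i, (Fintype.card ι : ℝ)⁻¹ * ‖f (x + s i)‖) ^ q :=
        Real.rpow_le_rpow (norm_nonneg _) hnorm (zero_le_one.trans hq)
    _ ≤ ∑ i, (Fintype.card ι : ℝ)⁻¹ * ‖f (x + s i)‖ ^ q :=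
        Real.rpow_arith_mean_le_arith_mean_rpow univ _ _ (fun _ _ => by positivity)
          (by simp [hcard]) (fun _ _ => norm_nonneg _) hq
    _ = shiftMean ℝ s (fun y => ‖f y‖ ^ q) x := by rw [shiftMean_apply, mul_sum]

variable {ι E : Type*} [Fintype ι] [Nonempty ι] [TopologicalSpace E] [AddGroup E]
  [IsTopologicalAddGroup E] [MeasurableSpace E] [BorelSpace E] {μ : Measure E}
  [IsFiniteMeasureOnCompacts μ] [μ.IsAddRightInvariant] {f : E → ℂ}

lemma integral_norm_shiftMean_rpow_le (hq : 1 ≤ q) (hf : IsCc f) (s : ι → E) :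
    ∫ x, ‖shiftMean ℂ s f x‖ ^ q ∂μ ≤ ∫ x, ‖f x‖ ^ q ∂μ := by
  have hfq : IsCc fun x => ‖f x‖ ^ q := hf.norm.rpow (by linarith)
  rw [← integral_shiftMean hfq s]
  exact integral_mono ((hf.shiftMean s).norm.rpow (by linarith)).integrable
    (hfq.shiftMean s).integrable fun x => norm_shiftMean_rpow_le hq s f x

lemma integral_norm_add_shiftMean_rpow_le (hq : 1 ≤ q) (hf : IsCc f) (s : ι → E) :
    ∫ x, ‖(f + shiftMean ℂ s f) x‖ ^ q ∂μ ≤ 2 ^ q * ∫ x, ‖f x‖ ^ q ∂μ := by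
  have hq0 : 0 < q := by linarith
  have hfq := hf.norm.rpow hq0
  have hmean := (hf.shiftMean s).norm.rpow hq0
  calc ∫ x, ‖(f + shiftMean ℂ s f) x‖ ^ q ∂μ
      ≤ ∫ x, 2 ^ (q - 1) * (‖f x‖ ^ q + ‖shiftMean ℂ s f x‖ ^ q) ∂μ :=
        integral_mono ((hf.add (hf.shiftMean s)).norm.rpow hq0).integrable
          ((hfq.add hmean).const_mul _).integrable fun x => norm_add_rpow_le hq _ _
    _ = 2 ^ (q - 1) * (∫ x, ‖f x‖ ^ q ∂μ + ∫ x, ‖shiftMean ℂ s f x‖ ^ q ∂μ) := by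
        rw [integral_const_mul, integral_add hfq.integrable hmean.integrable]
    _ ≤ 2 ^ (q - 1) * (∫ x, ‖f x‖ ^ q ∂μ + ∫ x, ‖f x‖ ^ q ∂μ) := by
        exact mul_le_mul_of_nonneg_left
          (add_le_add le_rfl (integral_norm_shiftMean_rpow_le hq hf s)) (by positivity)
    _ = 2 ^ q * ∫ x, ‖f x‖ ^ q ∂μ := by
        rw [Real.rpow_sub_one (by norm_num)]
        ring

end NormInequalities

section DiscreteDel

variable {E : Type*} [AddCommGroup E]

/-- The discretization `D₀ - i D₁` of `∂ = ∂₀ - i ∂₁`, where `D k` is the central difference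
operator in the direction `e k`. -/
def discreteDel (e : Fin 2 → E) : Module.End ℂ (E → ℂ) :=
  shiftDiff ℂ (e 0) (-e 0) - Complex.I • shiftDiff ℂ (e 1) (-e 1)

/-- The discretization `D₀ + i D₁` of `∂₀ + i ∂₁`; see `discreteDel`. -/
def discreteDelBar (e : Fin 2 → E) : Module.End ℂ (E → ℂ) :=
  shiftDiff ℂ (e 0) (-e 0) + Complex.I • shiftDiff ℂ (e 1) (-e 1)

/-- The steps of the random walk whose generator is `discreteDel e * discreteDelBar e`, up to a
constant. -/
def crossStencil (e : Fin 2 → E) : Fin 5 → E :=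
  ![0, e 0 + e 0, -(e 0 + e 0), e 1 + e 1, -(e 1 + e 1)]

/-- The averaging operator over the `crossStencil`. -/
abbrev crossMean (e : Fin 2 → E) : Module.End ℂ (E → ℂ) := shiftMean ℂ (crossStencil e)

variable (e : Fin 2 → E)

lemma exists_crossStencil_eq (k : Fin 2) : ∃ i, crossStencil e i = e k + e k := by
  fin_cases k
  exacts [⟨1, rfl⟩, ⟨3, rfl⟩]

lemma discreteDel_apply (f : E → ℂ) (x : E) :
    discreteDel e f x = (f (x + e 0) - f (x - e 0)) - Complex.I * (f (x + e 1) - f (x - e 1)) := by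
  simp [discreteDel, sub_eq_add_neg]

lemma discreteDelBar_apply (f : E → ℂ) (x : E) :
    discreteDelBar e f x
      = (f (x + e 0) - f (x - e 0)) + Complex.I * (f (x + e 1) - f (x - e 1)) := by
  simp [discreteDelBar, sub_eq_add_neg]

lemma one_sub_crossMean : 1 - crossMean e = -(1 / 5 : ℂ) • (discreteDel e * discreteDelBar e) := by
  ext f x
  have h01 : x - e 0 + e 1 = x + e 1 - e 0 := by abel
  have h02 : x - e 0 - e 1 = x - e 1 - e 0 := by abel
  have h03 : x + e 0 + e 1 = x + e 1 + e 0 := by abel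
  have h04 : x + e 0 - e 1 = x - e 1 + e 0 := by abel
  simp only [LinearMap.sub_apply, Pi.sub_apply, Module.End.one_apply, LinearMap.smul_apply,
    Pi.smul_apply, Module.End.mul_apply, shiftMean_apply, discreteDel_apply, discreteDelBar_apply,
    crossStencil, Fin.sum_univ_five, smul_eq_mul, h01, h02, h03, h04]
  simp only [Matrix.cons_val, add_zero, ← sub_eq_add_neg, ← sub_sub, ← add_assoc,
    add_sub_cancel_right, sub_add_cancel, Fintype.card_fin]
  linear_combination (-1 / 5 : ℂ) * (f (x + e 1 + e 1) + f (x - e 1 - e 1) - 2 * f x) * Complex.I_sq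

lemma shiftDiff_commute_shiftDiff (v w v' w' : E) :
    Commute (shiftDiff ℂ v w) (shiftDiff ℂ v' w') :=
  ((shift_commute v v').sub_right (shift_commute v w')).sub_left
    ((shift_commute w v').sub_right (shift_commute w w'))

lemma discreteDel_commute_discreteDelBar : Commute (discreteDel e) (discreteDelBar e) :=
  have h (v w v' w' : E) := shiftDiff_commute_shiftDiff v w v' w'
  ((h _ _ _ _).add_right ((h _ _ _ _).smul_right _)).sub_left
    (((h _ _ _ _).add_right ((h _ _ _ _).smul_right _)).smul_left _)

lemma shiftDiff_commute_crossMean (v w : E) : Commute (shiftDiff ℂ v w) (crossMean e) :=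
  (shift_commute_shiftMean v _).sub_left (shift_commute_shiftMean w _)

lemma discreteDel_commute_crossMean : Commute (discreteDel e) (crossMean e) :=
  (shiftDiff_commute_crossMean e _ _).sub_left ((shiftDiff_commute_crossMean e _ _).smul_left _)

lemma discreteDelBar_commute_crossMean : Commute (discreteDelBar e) (crossMean e) :=
  (shiftDiff_commute_crossMean e _ _).add_left ((shiftDiff_commute_crossMean e _ _).smul_left _)

lemma discreteDel_sub_crossMean_sq_mul :
    discreteDel e - crossMean e * crossMean e * discreteDel e =
      -(1 / 5 : ℂ) • (discreteDel e * discreteDel e * (1 + crossMean e) * discreteDelBar e) := by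
  have hbar : Commute (discreteDelBar e) ((1 + crossMean e) * discreteDel e) :=
    ((Commute.one_right _).add_right (discreteDelBar_commute_crossMean e)).mul_right
      (discreteDel_commute_discreteDelBar e).symm
  have hdel : Commute (1 + crossMean e) (discreteDel e) :=
    (Commute.one_left _).add_left (discreteDel_commute_crossMean e).symm
  calc discreteDel e - crossMean e * crossMean e * discreteDel e
      = (1 - crossMean e) * ((1 + crossMean e) * discreteDel e) := by
        simp only [sub_mul, add_mul, mul_add, one_mul, mul_assoc]
        abel
    _ = -(1 / 5 : ℂ) •
          (discreteDel e * (discreteDelBar e * ((1 + crossMean e) * discreteDel e))) := by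
        rw [one_sub_crossMean, smul_mul_assoc, mul_assoc]
    _ = _ := by rw [hbar.eq, hdel.eq]; simp only [mul_assoc]

variable [TopologicalSpace E] [IsTopologicalAddGroup E] {f g : E → ℂ}

lemma IsCc.discreteDel (hf : IsCc f) (e : Fin 2 → E) : IsCc (discreteDel e f) :=
  (hf.shiftDiff _ _).sub ((hf.shiftDiff _ _).const_mul Complex.I)

lemma IsCc.discreteDelBar (hf : IsCc f) (e : Fin 2 → E) : IsCc (discreteDelBar e f) :=
  (hf.shiftDiff _ _).add ((hf.shiftDiff _ _).const_mul Complex.I)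

variable [MeasurableSpace E] [BorelSpace E] {μ : Measure E} [IsFiniteMeasureOnCompacts μ]
  [μ.IsAddRightInvariant]

lemma integral_discreteDel_mul (hf : IsCc f) (hg : IsCc g) :
    ∫ x, discreteDel e f x * g x ∂μ = -∫ x, f x * discreteDel e g x ∂μ := by
  have htranspose (v : E) : ∫ x, shiftDiff ℂ v (-v) f x * g x ∂μ
      = -∫ x, f x * shiftDiff ℂ v (-v) g x ∂μ := by
    rw [integral_shiftDiff_mul hf hg, ← integral_neg]
    congr 1 with x
    simp only [shiftDiff_apply, neg_neg]
    ring
  have hint (v : E) := ((hf.shiftDiff v (-v)).mul hg).integrable (μ := μ)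
  have hint' (v : E) := (hf.mul (hg.shiftDiff v (-v))).integrable (μ := μ)
  simp only [discreteDel, LinearMap.sub_apply, LinearMap.smul_apply, Pi.sub_apply, Pi.smul_apply,
    smul_eq_mul, sub_mul, mul_sub, mul_assoc, mul_left_comm _ Complex.I]
  rw [integral_sub (hint _) ((hint _).const_mul _), integral_sub (hint' _) ((hint' _).const_mul _),
    integral_const_mul, integral_const_mul, htranspose, htranspose]
  ring

lemma integral_crossMean_mul (hf : IsCc f) (hg : IsCc g) :
    ∫ x, crossMean e f x * g x ∂μ = ∫ x, f x * crossMean e g x ∂μ := by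
  rw [integral_shiftMean_mul hf hg]
  congr 1 with x
  simp only [shiftMean_apply, Fin.sum_univ_five, crossStencil, Matrix.cons_val, neg_zero, neg_neg]
  ring

lemma integral_crossMean_pow_mul (hf : IsCc f) (hg : IsCc g) (K : ℕ) :
    ∫ x, (crossMean e ^ K) f x * g x ∂μ = ∫ x, f x * (crossMean e ^ K) g x ∂μ := by
  induction K generalizing g with
  | zero => rfl
  | succ K ih =>
    rw [shiftMean_pow_succ_apply, integral_crossMean_mul e (hf.shiftMean_pow _ K) hg,
      ih (hg.shiftMean _), pow_succ, Module.End.mul_apply]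

lemma integral_discreteDel_mul_sub (hf : IsCc f) (hg : IsCc g) :
    ∫ x, discreteDel e f x * g x ∂μ
        - ∫ x, crossMean e (discreteDel e f) x * crossMean e g x ∂μ =
      1 / 5 * ∫ x, discreteDel e ((1 + crossMean e) (discreteDelBar e f)) x
        * discreteDel e g x ∂μ := by
  have hdel := hf.discreteDel e
  have hF : IsCc ((1 + crossMean e) (discreteDelBar e f)) :=
    (hf.discreteDelBar e).add ((hf.discreteDelBar e).shiftMean _)
  have hop (x : E) := congrFun (LinearMap.congr_fun (discreteDel_sub_crossMean_sq_mul e) f) x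
  rw [← integral_crossMean_mul e (hdel.shiftMean _) hg,
    ← integral_sub (hdel.mul hg).integrable
      (((hdel.shiftMean _).shiftMean _).mul hg).integrable,
    ← neg_eq_iff_eq_neg.2 (integral_discreteDel_mul e (hF.discreteDel e) hg), ← integral_neg,
    ← integral_const_mul]
  congr 1 with x
  simp only [LinearMap.sub_apply, Pi.sub_apply, LinearMap.smul_apply, Pi.smul_apply,
    Module.End.mul_apply, smul_eq_mul] at hop
  linear_combination g x * hop x

lemma integral_discreteDel_mul_eq (hf : IsCc f) (hg : IsCc g) (K : ℕ) :
    ∫ x, discreteDel e f x * g x ∂μ =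
      1 / 5 * ∑ j ∈ range K,
          ∫ x, discreteDel e ((crossMean e ^ j) ((1 + crossMean e) (discreteDelBar e f))) x
            * discreteDel e ((crossMean e ^ j) g) x ∂μ
        + ∫ x, (crossMean e ^ K) (discreteDel e f) x * (crossMean e ^ K) g x ∂μ := by
  induction K with
  | zero => simp
  | succ K ih =>
    have hstep := integral_discreteDel_mul_sub (μ := μ) e (hf.shiftMean_pow (crossStencil e) K)
      (hg.shiftMean_pow (crossStencil e) K)
    have hdel : discreteDel e ((crossMean e ^ K) f) = (crossMean e ^ K) (discreteDel e f) :=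
      LinearMap.congr_fun ((discreteDel_commute_crossMean e).pow_right K).eq f
    have hF : (1 + crossMean e) (discreteDelBar e ((crossMean e ^ K) f))
        = (crossMean e ^ K) ((1 + crossMean e) (discreteDelBar e f)) :=
      LinearMap.congr_fun ((((Commute.one_left _).add_left (Commute.refl _)).mul_left
        (discreteDelBar_commute_crossMean e)).pow_right K).eq f
    rw [hdel, hF] at hstep
    rw [ih, sum_range_succ, shiftMean_pow_succ_apply, shiftMean_pow_succ_apply]
    linear_combination hstep

end DiscreteDel

section BilinearEstimate

lemma norm_integral_mul_le_sqrt_mul_sqrt {E : Type*} [TopologicalSpace E] [MeasurableSpace E]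
    [BorelSpace E] {μ : Measure E} [IsFiniteMeasureOnCompacts μ] {f g : E → ℂ} (hf : IsCc f)
    (hg : IsCc g) :
    ‖∫ x, f x * g x ∂μ‖ ≤ √(∫ x, ‖f x‖ ^ (2 : ℝ) ∂μ) * √(∫ x, ‖g x‖ ^ (2 : ℝ) ∂μ) := by
  refine (norm_integral_le_integral_norm _).trans ?_
  simp only [norm_mul, Real.sqrt_eq_rpow]
  exact integral_mul_norm_le_Lp_mul_Lq Real.HolderConjugate.two_two
    (hf.1.memLp_of_hasCompactSupport hf.2) (hg.1.memLp_of_hasCompactSupport hg.2)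

lemma norm_discreteDel_le {E : Type*} [AddCommGroup E] (e : Fin 2 → E) (f : E → ℂ)
    (x : E) : ‖discreteDel e f x‖ ≤ ∑ k, ‖shiftDiff ℂ (e k) (-e k) f x‖ := by
  rw [Fin.sum_univ_two]
  refine (norm_sub_le _ _).trans_eq ?_
  simp

variable {E : Type*} [TopologicalSpace E] [AddCommGroup E] [IsTopologicalAddGroup E]
  [MeasurableSpace E] [BorelSpace E] {μ : Measure E} [IsFiniteMeasureOnCompacts μ]
  {q r : ℝ} {f g F G : E → ℂ}

lemma integral_norm_discreteDel_mul_le (hF : IsCc F) (hG : IsCc G) (e : Fin 2 → E) :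
    ∫ x, ‖discreteDel e F x‖ * ‖discreteDel e G x‖ ∂μ ≤
      ∑ k, ∑ l, ∫ x, ‖shiftDiff ℂ (e k) (-e k) F x‖ * ‖shiftDiff ℂ (e l) (-e l) G x‖ ∂μ := by
  have hcc (k l : Fin 2) :
      IsCc fun x => ‖shiftDiff ℂ (e k) (-e k) F x‖ * ‖shiftDiff ℂ (e l) (-e l) G x‖ :=
    (hF.shiftDiff _ _).norm.mul (hG.shiftDiff _ _).norm
  calc _ ≤ ∫ x, ∑ k, ∑ l,
        ‖shiftDiff ℂ (e k) (-e k) F x‖ * ‖shiftDiff ℂ (e l) (-e l) G x‖ ∂μ := by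
        refine integral_mono ((hF.discreteDel e).norm.mul (hG.discreteDel e).norm).integrable
          (IsCc.sum univ fun k => IsCc.sum univ fun l => hcc k l).integrable fun x => ?_
        simp only [← sum_mul_sum]
        exact mul_le_mul (norm_discreteDel_le e F x) (norm_discreteDel_le e G x) (norm_nonneg _)
          (sum_nonneg fun _ _ => norm_nonneg _)
    _ = _ := by
        rw [integral_finsetSum _ fun k _ => (IsCc.sum univ fun l => hcc k l).integrable]
        exact sum_congr rfl fun k _ => integral_finsetSum _ fun l _ => (hcc k l).integrable

variable [μ.IsAddRightInvariant]

lemma IsBellmanFunction.sum_integral_norm_centralDiff_mul_le {C : ℝ} {B : ℝ → ℝ → ℝ}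
    (hB : IsBellmanFunction (Fin 5) q r C B) (hC : 0 ≤ C) (hq : 0 < q) (hr : 0 < r)
    (hF : IsCc F) (hG : IsCc G) (e : Fin 2 → E) (k l : Fin 2) (K : ℕ) :
    ∑ j ∈ range K, ∫ x, ‖shiftDiff ℂ (e k) (-e k) ((crossMean e ^ j) F) x‖ *
        ‖shiftDiff ℂ (e l) (-e l) ((crossMean e ^ j) G) x‖ ∂μ ≤
      16 * C * (∫ x, ‖F x‖ ^ q ∂μ + ∫ x, ‖G x‖ ^ r ∂μ) := by
  obtain ⟨i, hi⟩ := exists_crossStencil_eq e k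
  obtain ⟨i', hi'⟩ := exists_crossStencil_eq e l
  have hzero : crossStencil e 0 = 0 := rfl
  have hG' : ∫ x, ‖shift ℂ (e k - e l) G x‖ ^ r ∂μ = ∫ x, ‖G x‖ ^ r ∂μ :=
    integral_add_right_eq_self (fun x => ‖G x‖ ^ r) _
  rw [← hG']
  refine (sum_congr rfl fun j _ => ?_).trans_le <|
    hB.sum_integral_norm_shiftDiff_mul_le (μ := μ) (s := crossStencil e) hC hq hr hF
      (hG.shift (e k - e l)) i 0 i' 0 K
  rw [← integral_add_right_eq_self _ (e k)]
  congr 1 with x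
  have hshift : (crossMean e ^ j) (shift ℂ (e k - e l) G)
      = shift ℂ (e k - e l) ((crossMean e ^ j) G) :=
    (LinearMap.congr_fun ((shift_commute_shiftMean (e k - e l) _).pow_right j).eq G).symm
  have hplus : x + (e l + e l) + (e k - e l) = x + (e k + e l) := by abel
  have hminus : x + (e k - e l) = x + (e k + -e l) := by abel
  rw [hshift, hi, hi', hzero]
  simp only [shiftDiff_apply, shift_apply, add_zero, hplus, hminus]
  simp only [add_assoc, add_neg_cancel, add_zero]

lemma exists_sum_integral_norm_discreteDel_mul_le (μ : Measure E) [IsFiniteMeasureOnCompacts μ]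
    [μ.IsAddRightInvariant] (hqr : q.HolderConjugate r) :
    ∃ C : ℝ, 0 ≤ C ∧ ∀ (e : Fin 2 → E) (F G : E → ℂ), IsCc F → IsCc G → ∀ K : ℕ,
      ∑ j ∈ range K, ∫ x, ‖discreteDel e ((crossMean e ^ j) F) x‖ *
          ‖discreteDel e ((crossMean e ^ j) G) x‖ ∂μ ≤
        C * (∫ x, ‖F x‖ ^ q ∂μ + ∫ x, ‖G x‖ ^ r ∂μ) := by
  obtain ⟨C, B, hC, hB⟩ := exists_isBellmanFunction (Fin 5) hqr
  refine ⟨64 * C, by positivity, fun e F G hF hG K => ?_⟩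
  calc _ ≤ ∑ j ∈ range K, ∑ k, ∑ l, ∫ x, ‖shiftDiff ℂ (e k) (-e k) ((crossMean e ^ j) F) x‖ *
          ‖shiftDiff ℂ (e l) (-e l) ((crossMean e ^ j) G) x‖ ∂μ :=
        sum_le_sum fun j _ =>
          integral_norm_discreteDel_mul_le (hF.shiftMean_pow _ j) (hG.shiftMean_pow _ j) e
    _ = ∑ k, ∑ l, ∑ j ∈ range K, ∫ x, ‖shiftDiff ℂ (e k) (-e k) ((crossMean e ^ j) F) x‖ *
          ‖shiftDiff ℂ (e l) (-e l) ((crossMean e ^ j) G) x‖ ∂μ := by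
        rw [sum_comm]
        exact sum_congr rfl fun k _ => sum_comm
    _ ≤ ∑ _k : Fin 2, ∑ _l : Fin 2, 16 * C * (∫ x, ‖F x‖ ^ q ∂μ + ∫ x, ‖G x‖ ^ r ∂μ) :=
        sum_le_sum fun k _ => sum_le_sum fun l _ =>
          hB.sum_integral_norm_centralDiff_mul_le hC hqr.pos hqr.symm.pos hF hG e k l K
    _ = _ := by simp; ring

lemma tendsto_integral_norm_crossMean_pow_discreteDel_rpow_two (hf : IsCc f) (e : Fin 2 → E) :
    Filter.Tendsto (fun K => ∫ x, ‖(crossMean e ^ K) (discreteDel e f) x‖ ^ (2 : ℝ) ∂μ)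
      Filter.atTop (nhds 0) := by
  obtain ⟨C, -, hC⟩ := exists_sum_integral_norm_discreteDel_mul_le μ Real.HolderConjugate.two_two
  refine (summable_of_sum_range_le (fun j => integral_nonneg fun x => by positivity)
    fun K => le_of_eq_of_le ?_ (hC e f f hf hf K)).tendsto_atTop_zero
  refine sum_congr rfl fun j _ => integral_congr_ae (.of_forall fun x => ?_)
  have hcomm : (crossMean e ^ j) (discreteDel e f) = discreteDel e ((crossMean e ^ j) f) :=
    (LinearMap.congr_fun ((discreteDel_commute_crossMean e).pow_right j).eq f).symm
  simp only [hcomm, Real.rpow_two, sq]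

lemma tendsto_integral_crossMean_pow_discreteDel_mul (hf : IsCc f) (hg : IsCc g) (e : Fin 2 → E) :
    Filter.Tendsto (fun K => ∫ x, (crossMean e ^ K) (discreteDel e f) x * (crossMean e ^ K) g x ∂μ)
      Filter.atTop (nhds 0) := by
  have hdel := hf.discreteDel e
  have hpow (K : ℕ) : ∫ x, (crossMean e ^ K) (discreteDel e f) x * (crossMean e ^ K) g x ∂μ =
      ∫ x, (crossMean e ^ (K + K)) (discreteDel e f) x * g x ∂μ := by
    rw [← integral_crossMean_pow_mul e (hdel.shiftMean_pow _ K) hg, pow_add, Module.End.mul_apply]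
  have hdecay := (((tendsto_integral_norm_crossMean_pow_discreteDel_rpow_two (μ := μ) hf e).comp
    (Filter.tendsto_id.atTop_add_atTop Filter.tendsto_id)).sqrt).mul_const
      (√(∫ x, ‖g x‖ ^ (2 : ℝ) ∂μ))
  rw [Real.sqrt_zero, zero_mul] at hdecay
  refine squeeze_zero_norm (fun K => ?_) hdecay
  rw [hpow]
  exact norm_integral_mul_le_sqrt_mul_sqrt (hdel.shiftMean_pow _ _) hg

lemma exists_norm_sum_integral_discreteDel_mul_le (μ : Measure E) [IsFiniteMeasureOnCompacts μ]
    [μ.IsAddRightInvariant] (hqr : q.HolderConjugate r) :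
    ∃ C : ℝ, 0 ≤ C ∧ ∀ (e : Fin 2 → E) (f g : E → ℂ), IsCc f → IsCc g → ∀ K : ℕ,
      ‖∑ j ∈ range K, ∫ x, discreteDel e ((crossMean e ^ j) f) x
          * discreteDel e ((crossMean e ^ j) g) x ∂μ‖ ≤
        C * (∫ x, ‖f x‖ ^ q ∂μ + ∫ x, ‖g x‖ ^ r ∂μ) := by
  obtain ⟨C, hC, hbound⟩ := exists_sum_integral_norm_discreteDel_mul_le μ hqr
  refine ⟨C, hC, fun e f g hf hg K => (norm_sum_le _ _).trans (le_trans ?_ (hbound e f g hf hg K))⟩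
  exact sum_le_sum fun j _ => (norm_integral_le_integral_norm _).trans_eq (by simp only [norm_mul])

lemma exists_norm_integral_discreteDel_mul_le (μ : Measure E) [IsFiniteMeasureOnCompacts μ]
    [μ.IsAddRightInvariant] (hqr : q.HolderConjugate r) :
    ∃ C : ℝ, 0 ≤ C ∧ ∀ (e : Fin 2 → E) (f g : E → ℂ), IsCc f → IsCc g →
      ‖∫ x, discreteDel e f x * g x ∂μ‖ ≤
        C * (∫ x, ‖discreteDelBar e f x‖ ^ q ∂μ + ∫ x, ‖g x‖ ^ r ∂μ) := by
  obtain ⟨C, hC, hbound⟩ := exists_norm_sum_integral_discreteDel_mul_le μ hqr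
  refine ⟨C * 2 ^ q, by positivity, fun e f g hf hg => ?_⟩
  have hbar := hf.discreteDelBar e
  set F := (1 + crossMean e) (discreteDelBar e f)
  have hF : IsCc F := hbar.add (hbar.shiftMean _)
  set X := ∫ x, ‖discreteDelBar e f x‖ ^ q ∂μ
  set Y := ∫ x, ‖g x‖ ^ r ∂μ
  have hY : 0 ≤ Y := integral_nonneg fun x => by positivity
  have hFX : ∫ x, ‖F x‖ ^ q ∂μ ≤ 2 ^ q * X :=
    integral_norm_add_shiftMean_rpow_le hqr.lt.le hbar (crossStencil e)
  have hsum (K : ℕ) : ‖1 / 5 * ∑ j ∈ range K, ∫ x, discreteDel e ((crossMean e ^ j) F) x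
      * discreteDel e ((crossMean e ^ j) g) x ∂μ‖ ≤ C * 2 ^ q * (X + Y) := by
    rw [norm_mul]
    calc _ ≤ C * (∫ x, ‖F x‖ ^ q ∂μ + Y) :=
          (mul_le_of_le_one_left (norm_nonneg _) (by norm_num)).trans (hbound e F g hF hg K)
      _ ≤ C * (2 ^ q * X + 2 ^ q * Y) := by
          gcongr
          exact le_mul_of_one_le_left hY (Real.one_le_rpow one_le_two hqr.nonneg)
      _ = C * 2 ^ q * (X + Y) := by ring
  have hlim := (tendsto_integral_crossMean_pow_discreteDel_mul (μ := μ) hf hg e).norm.const_add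
    (C * 2 ^ q * (X + Y))
  rw [norm_zero, add_zero] at hlim
  refine ge_of_tendsto' hlim fun K => ?_
  rw [integral_discreteDel_mul_eq e hf hg K]
  exact (norm_add_le _ _).trans (add_le_add_left (hsum K) _)

end BilinearEstimate

section Duality

variable {q r : ℝ}

/-- The function `conj z |z| ^ (q - 2)`, which turns `u ∈ L^q` into the element of the dual space
norming it. -/
def dualPow (q : ℝ) (z : ℂ) : ℂ := conj z * (‖z‖ ^ (q - 2) : ℝ)

lemma norm_dualPow (hq : 1 < q) (z : ℂ) : ‖dualPow q z‖ = ‖z‖ ^ (q - 1) := by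
  rw [dualPow, norm_mul, RCLike.norm_conj, Complex.norm_of_nonneg (by positivity)]
  rcases eq_or_ne z 0 with rfl | hz
  · simp [Real.zero_rpow (sub_pos.2 hq).ne']
  · rw [show q - 1 = 1 + (q - 2) by ring, Real.rpow_add (norm_pos_iff.2 hz), Real.rpow_one]

lemma mul_dualPow (hq : 1 < q) (z : ℂ) : z * dualPow q z = (‖z‖ ^ q : ℝ) := by
  rcases eq_or_ne z 0 with rfl | hz
  · simp [Real.zero_rpow (zero_lt_one.trans hq).ne']
  · rw [dualPow, ← mul_assoc, Complex.mul_conj, Complex.normSq_eq_norm_sq, ← Complex.ofReal_mul,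
      ← Real.rpow_two, ← Real.rpow_add (norm_pos_iff.2 hz), add_sub_cancel]

lemma norm_dualPow_rpow (hqr : q.HolderConjugate r) (z : ℂ) : ‖dualPow q z‖ ^ r = ‖z‖ ^ q := by
  rw [norm_dualPow hqr.lt, ← Real.rpow_mul (norm_nonneg z), sub_mul, hqr.mul_eq_add]
  ring_nf

lemma dualPow_zero (q : ℝ) : dualPow q 0 = 0 := by
  simp [dualPow]

lemma continuous_dualPow (hq : 1 < q) : Continuous (dualPow q) := by
  refine continuous_iff_continuousAt.2 fun z => ?_
  rcases eq_or_ne z 0 with rfl | hz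
  · rw [ContinuousAt, dualPow_zero, tendsto_zero_iff_norm_tendsto_zero]
    simp only [norm_dualPow hq]
    have hcont : Continuous fun z : ℂ => ‖z‖ ^ (q - 1) :=
      continuous_norm.rpow_const fun _ => Or.inr (sub_pos.2 hq).le
    simpa [Real.zero_rpow (sub_pos.2 hq).ne'] using hcont.tendsto 0
  · exact Complex.continuous_conj.continuousAt.mul (Complex.continuous_ofReal.continuousAt.comp
      (continuous_norm.continuousAt.rpow_const (Or.inl (norm_ne_zero_iff.2 hz))))

lemma exists_le_mul_of_forall_mul_le (hr : 1 < r) {C : ℝ} (hC : 0 ≤ C) :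
    ∃ C' : ℝ, 0 ≤ C' ∧ ∀ {X U : ℝ}, 0 ≤ U →
      (∀ t : ℝ, 0 < t → t * U ≤ C * (X + t ^ r * U)) → U ≤ C' * X := by
  obtain ⟨t, ht, htC⟩ : ∃ t : ℝ, 0 < t ∧ (C + 1) * t ^ (r - 1) = 1 / 2 := by
    refine ⟨(1 / (2 * (C + 1))) ^ (r - 1)⁻¹, by positivity, ?_⟩
    rw [Real.rpow_inv_rpow (by positivity) (sub_pos.2 hr).ne']
    field_simp
  have htr : t ^ r = t * t ^ (r - 1) := by
    rw [← Real.rpow_one_add' ht.le (by linarith), add_sub_cancel]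
  refine ⟨2 * C / t, by positivity, fun {_ U} hU h => ?_⟩
  rw [div_mul_eq_mul_div, le_div_iff₀ ht]
  have hCU : C * (t ^ r * U) ≤ t / 2 * U := by
    calc C * (t ^ r * U) ≤ (C + 1) * (t ^ r * U) := by gcongr; linarith
      _ = t * ((C + 1) * t ^ (r - 1)) * U := by rw [htr]; ring
      _ = t / 2 * U := by rw [htC]; ring
  linarith [h t ht]

lemma exists_integral_norm_discreteDel_rpow_le {E : Type*} [TopologicalSpace E] [AddCommGroup E]
    [IsTopologicalAddGroup E] [MeasurableSpace E] [BorelSpace E] (μ : Measure E)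
    [IsFiniteMeasureOnCompacts μ] [μ.IsAddRightInvariant] (hq : 1 < q) :
    ∃ C : ℝ, 0 ≤ C ∧ ∀ (e : Fin 2 → E) (f : E → ℂ), IsCc f →
      ∫ x, ‖discreteDel e f x‖ ^ q ∂μ ≤ C * ∫ x, ‖discreteDelBar e f x‖ ^ q ∂μ := by
  have hqr := Real.HolderConjugate.conjExponent hq
  obtain ⟨C, hC, hbilin⟩ := exists_norm_integral_discreteDel_mul_le μ hqr
  obtain ⟨C', hC', hscale⟩ := exists_le_mul_of_forall_mul_le hqr.symm.lt hC
  refine ⟨C', hC', fun e f hf => hscale (integral_nonneg fun x => by positivity) fun t ht => ?_⟩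
  set u := discreteDel e f
  have hdual : IsCc fun x => (t : ℂ) * dualPow q (u x) :=
    ((hf.discreteDel e).comp_left (continuous_dualPow hq) (dualPow_zero q)).const_mul _
  have hpair (x : E) : u x * (t * dualPow q (u x)) = (t * ‖u x‖ ^ q : ℝ) := by
    rw [mul_left_comm, mul_dualPow hq, Complex.ofReal_mul]
  have hnorm (x : E) :
      ‖(t : ℂ) * dualPow q (u x)‖ ^ q.conjExponent = t ^ q.conjExponent * ‖u x‖ ^ q := by
    rw [norm_mul, Complex.norm_of_nonneg ht.le, Real.mul_rpow ht.le (norm_nonneg _),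
      norm_dualPow_rpow hqr]
  have hbound : ‖∫ x, u x * (t * dualPow q (u x)) ∂μ‖ ≤ _ := hbilin e f _ hf hdual
  simp only [hpair, hnorm, integral_complex_ofReal, integral_const_mul] at hbound
  exact (Real.le_norm_self _).trans ((Complex.norm_real _).symm.trans_le hbound)

end Duality

section Limit

variable {E : Type*} [NormedAddCommGroup E] [NormedSpace ℝ E] {f : E → ℂ}

/-- The central difference quotient of step `t` in the direction `v`. -/
def centralQuotient (t : ℝ) (v : E) : Module.End ℂ (E → ℂ) :=
  ((2 * t)⁻¹ : ℂ) • shiftDiff ℂ (t • v) (-(t • v))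

lemma centralQuotient_apply (t : ℝ) (v : E) (f : E → ℂ) (x : E) :
    centralQuotient t v f x = (2 * t)⁻¹ * (f (x + t • v) - f (x - t • v)) := by
  simp [centralQuotient, sub_eq_add_neg]

lemma discreteDel_smul_smul (t : ℝ) (e : Fin 2 → E) (f : E → ℂ) :
    discreteDel (t • e) (((2 * t)⁻¹ : ℂ) • f)
      = centralQuotient t (e 0) f + (-Complex.I) • centralQuotient t (e 1) f := by
  ext x
  simp [discreteDel_apply, centralQuotient_apply]
  ring

lemma discreteDelBar_smul_smul (t : ℝ) (e : Fin 2 → E) (f : E → ℂ) :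
    discreteDelBar (t • e) (((2 * t)⁻¹ : ℂ) • f)
      = centralQuotient t (e 0) f + Complex.I • centralQuotient t (e 1) f := by
  ext x
  simp [discreteDelBar_apply, centralQuotient_apply]
  ring

lemma IsCc.centralQuotient (hf : IsCc f) (t : ℝ) (v : E) : IsCc (centralQuotient t v f) :=
  (hf.shiftDiff _ _).const_mul _

lemma tendsto_centralQuotient {x : E} (hf : DifferentiableAt ℝ f x) (v : E) :
    Filter.Tendsto (fun t => centralQuotient t v f x) (nhdsWithin 0 {0}ᶜ)
      (nhds (fderiv ℝ f x v)) := by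
  have hplus := (hf.hasFDerivAt.hasLineDerivAt v).tendsto_slope_zero
  have hminus := (hf.hasFDerivAt.hasLineDerivAt (-v)).tendsto_slope_zero
  have hmean := (hplus.sub hminus).const_mul (1 / 2 : ℂ)
  rw [map_neg, sub_neg_eq_add, ← two_mul, ← mul_assoc, one_div, inv_mul_cancel₀ two_ne_zero,
    one_mul] at hmean
  refine hmean.congr fun t => ?_
  simp only [centralQuotient_apply, smul_neg, ← sub_eq_add_neg, Complex.real_smul, mul_inv]
  push_cast
  ring

lemma norm_centralQuotient_le {K : ℝ≥0} (hf : LipschitzWith K f) {t : ℝ} (ht : 0 < t) (v x : E) :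
    ‖centralQuotient t v f x‖ ≤ K * ‖v‖ := by
  have hlip := hf.norm_sub_le (x + t • v) (x - t • v)
  rw [add_sub_sub_cancel, ← add_smul, ← two_mul, norm_smul, Real.norm_of_nonneg (by positivity)]
    at hlip
  rw [centralQuotient_apply, norm_mul, Complex.norm_of_nonneg (by positivity),
    inv_mul_le_iff₀ (by positivity)]
  linarith

lemma support_centralQuotient_subset {t : ℝ} (ht : |t| ≤ 1) (v : E) (f : E → ℂ) :
    Function.support (centralQuotient t v f) ⊆ cthickening ‖v‖ (tsupport f) := by
  intro x hx
  have hle : ‖t • v‖ ≤ ‖v‖ := by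
    rw [norm_smul, Real.norm_eq_abs]
    exact mul_le_of_le_one_left (norm_nonneg v) ht
  have hzero : ¬ (f (x + t • v) = 0 ∧ f (x - t • v) = 0) := fun h => hx <| by
    rw [centralQuotient_apply, h.1, h.2, sub_zero, mul_zero]
  rcases not_and_or.1 hzero with h | h
  · exact mem_cthickening_of_dist_le _ _ _ _ (subset_tsupport f h) (by simpa)
  · exact mem_cthickening_of_dist_le _ _ _ _ (subset_tsupport f h) (by simpa)

lemma tendsto_integral_norm_rpow_of_bounded {X F : Type*} [TopologicalSpace X] [R1Space X]
    [MeasurableSpace X] [OpensMeasurableSpace X] {μ : Measure X} [IsFiniteMeasureOnCompacts μ]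
    [NormedAddCommGroup F]
    {u : ℕ → X → F} {u₀ : X → F} {k : Set X} {M q : ℝ} (hq : 0 < q) (hk : IsCompact k)
    (hu : ∀ n, Continuous (u n)) (hM : ∀ n x, ‖u n x‖ ≤ M)
    (hsupp : ∀ n, Function.support (u n) ⊆ k)
    (hlim : ∀ x, Filter.Tendsto (fun n => u n x) Filter.atTop (nhds (u₀ x))) :
    Filter.Tendsto (fun n => ∫ x, ‖u n x‖ ^ q ∂μ) Filter.atTop (nhds (∫ x, ‖u₀ x‖ ^ q ∂μ)) := by
  refine tendsto_integral_of_dominated_convergence ((closure k).indicator fun _ => M ^ q)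
    (fun n => ?_) ?_ (fun n => .of_forall fun x => ?_)
    (.of_forall fun x => (hlim x).norm.rpow_const (Or.inr hq.le))
  · exact ((hu n).norm.rpow_const fun _ => Or.inr hq.le).measurable.aestronglyMeasurable
  · exact (integrable_indicator_iff isClosed_closure.measurableSet).2
      (integrableOn_const hk.closure.measure_lt_top.ne)
  · rw [Real.norm_of_nonneg (by positivity)]
    by_cases hx : x ∈ closure k
    · rw [Set.indicator_of_mem hx]
      exact Real.rpow_le_rpow (norm_nonneg _) (hM n x) hq.le
    · have hux : u n x = 0 := Function.notMem_support.1 fun h => hx (subset_closure (hsupp n h))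
      rw [Set.indicator_of_notMem hx, hux, norm_zero, Real.zero_rpow hq.ne']

variable [ProperSpace E] [MeasurableSpace E] [BorelSpace E] {μ : Measure E}
  [IsFiniteMeasureOnCompacts μ] {q : ℝ}

lemma tendsto_integral_norm_centralQuotient_add_rpow (hf : ContDiff ℝ 1 f)
    (hsupp : HasCompactSupport f) (hq : 0 < q) (v w : E) (ε : ℂ) :
    Filter.Tendsto (fun n : ℕ => ∫ x, ‖(centralQuotient (1 / ((n : ℝ) + 1)) v f
        + ε • centralQuotient (1 / ((n : ℝ) + 1)) w f) x‖ ^ q ∂μ) Filter.atTop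
      (nhds (∫ x, ‖fderiv ℝ f x v + ε * fderiv ℝ f x w‖ ^ q ∂μ)) := by
  obtain ⟨K, hK⟩ := hf.lipschitzWith_of_hasCompactSupport hsupp one_ne_zero
  have hcc : IsCc f := ⟨hf.continuous, hsupp⟩
  have hpos (n : ℕ) : 0 < 1 / ((n : ℝ) + 1) := Nat.one_div_pos_of_nat
  have hle (n : ℕ) : |1 / ((n : ℝ) + 1)| ≤ 1 := by
    rw [abs_of_pos (hpos n)]
    exact div_le_one_of_le₀ (by linarith [n.cast_nonneg (α := ℝ)]) (by positivity)
  have hstep : Filter.Tendsto (fun n : ℕ => 1 / ((n : ℝ) + 1)) Filter.atTop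
      (nhdsWithin 0 {0}ᶜ) :=
    tendsto_nhdsWithin_iff.2
      ⟨tendsto_one_div_add_atTop_nhds_zero_nat, .of_forall fun n => (hpos n).ne'⟩
  refine tendsto_integral_norm_rpow_of_bounded hq
    ((hsupp.cthickening (r := ‖v‖)).union (hsupp.cthickening (r := ‖w‖)))
    (M := K * ‖v‖ + ‖ε‖ * (K * ‖w‖))
    (fun n => ((hcc.centralQuotient _ v).add ((hcc.centralQuotient _ w).const_mul ε)).1)
    (fun n x => ?_) (fun n x hx => ?_) fun x => ?_
  · refine (norm_add_le _ _).trans (add_le_add (norm_centralQuotient_le hK (hpos n) v x) ?_)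
    rw [Pi.smul_apply, norm_smul]
    gcongr
    exact norm_centralQuotient_le hK (hpos n) w x
  · exact (Function.support_add _ _ hx).imp
      (fun h => support_centralQuotient_subset (hle n) v f h)
      fun h => support_centralQuotient_subset (hle n) w f (Function.support_const_smul_subset _ _ h)
  · have hdiff := hf.differentiable one_ne_zero x
    exact ((tendsto_centralQuotient hdiff v).comp hstep).add
      (((tendsto_centralQuotient hdiff w).comp hstep).const_mul ε)

lemma exists_integral_norm_fderiv_sub_rpow_le (μ : Measure E) [IsFiniteMeasureOnCompacts μ]
    [μ.IsAddRightInvariant] (hq : 1 < q) :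
    ∃ C : ℝ, 0 ≤ C ∧ ∀ (v w : E) (f : E → ℂ), ContDiff ℝ 1 f → HasCompactSupport f →
      ∫ x, ‖fderiv ℝ f x v - Complex.I * fderiv ℝ f x w‖ ^ q ∂μ ≤
        C * ∫ x, ‖fderiv ℝ f x v + Complex.I * fderiv ℝ f x w‖ ^ q ∂μ := by
  obtain ⟨C, hC, hdisc⟩ := exists_integral_norm_discreteDel_rpow_le μ hq
  refine ⟨C, hC, fun v w f hf hsupp => ?_⟩
  have hq0 := zero_lt_one.trans hq
  have hcc : IsCc f := ⟨hf.continuous, hsupp⟩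
  have hleft := tendsto_integral_norm_centralQuotient_add_rpow (μ := μ) hf hsupp hq0 v w
    (-Complex.I)
  have hright := (tendsto_integral_norm_centralQuotient_add_rpow (μ := μ) hf hsupp hq0 v w
    Complex.I).const_mul C
  simp only [sub_eq_add_neg, ← neg_mul]
  refine le_of_tendsto_of_tendsto' hleft hright fun n => ?_
  set t := 1 / ((n : ℝ) + 1)
  have hn := hdisc (t • ![v, w]) (((2 * t)⁻¹ : ℂ) • f) (hcc.const_mul _)
  rwa [discreteDel_smul_smul, discreteDelBar_smul_smul] at hn

end Limit

section VectorField

variable {N : ℕ}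

lemma pd_conj (i : Fin N) (f : RN N → ℂ) (x : RN N) :
    pd i (fun y => conj (f y)) x = conj (pd i f x) := by
  have h : (fun y => conj (f y)) = Complex.conjCLE ∘ f := rfl
  rw [pd, h, ContinuousLinearEquiv.comp_fderiv]
  rfl

lemma vf_conj (c : Fin N → ℂ) (f : RN N → ℂ) (x : RN N) :
    vf c (fun y => conj (f y)) x = conj (vf (fun i => conj (c i)) f x) := by
  simp [vf, pd_conj, map_sum]

lemma fderiv_eq_sum_pd (f : RN N → ℂ) (x v : RN N) :
    fderiv ℝ f x v = ∑ i, (v i : ℂ) * pd i f x := by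
  conv_lhs => rw [← (EuclideanSpace.basisFun (Fin N) ℝ).sum_repr v]
  simp [pd]

lemma vf_eq_fderiv (c : Fin N → ℂ) (f : RN N → ℂ) (x : RN N) :
    vf c f x = fderiv ℝ f x (WithLp.toLp 2 fun i => (c i).re)
      + Complex.I * fderiv ℝ f x (WithLp.toLp 2 fun i => (c i).im) := by
  rw [fderiv_eq_sum_pd, fderiv_eq_sum_pd, vf, mul_sum, ← sum_add_distrib]
  refine sum_congr rfl fun i _ => ?_
  linear_combination -pd i f x * Complex.re_add_im (c i)

lemma vf_conj_coeff_eq_fderiv (c : Fin N → ℂ) (f : RN N → ℂ) (x : RN N) :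
    vf (fun i => conj (c i)) f x = fderiv ℝ f x (WithLp.toLp 2 fun i => (c i).re)
      - Complex.I * fderiv ℝ f x (WithLp.toLp 2 fun i => (c i).im) := by
  have him : (WithLp.toLp 2 fun i => (conj (c i)).im : RN N)
      = -WithLp.toLp 2 fun i => (c i).im := by
    ext i
    simp
  rw [vf_eq_fderiv, him, map_neg, mul_neg, ← sub_eq_add_neg]
  simp only [Complex.conj_re]

lemma exists_integral_norm_vf_conj_coeff_rpow_le (N : ℕ) {q : ℝ} (hq : 1 < q) :
    ∃ C : ℝ, 0 ≤ C ∧ ∀ (c : Fin N → ℂ) (f : RN N → ℂ), IsTest f →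
      ∫ x, ‖vf (fun i => conj (c i)) f x‖ ^ q ≤ C * ∫ x, ‖vf c f x‖ ^ q := by
  obtain ⟨C, hC, hineq⟩ := exists_integral_norm_fderiv_sub_rpow_le (volume : Measure (RN N)) hq
  refine ⟨C, hC, fun c f hf => ?_⟩
  simp only [vf_eq_fderiv c, vf_conj_coeff_eq_fderiv]
  exact hineq _ _ f (hf.1.of_le (by simp)) hf.2

end VectorField

section Calculus

variable {N : ℕ} {f g : RN N → ℂ}

lemma vf_zero (c : Fin N → ℂ) (x : RN N) : vf c (0 : RN N → ℂ) x = 0 := by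
  simp [vf, pd]

lemma vf_real_smul (c : Fin N → ℂ) (r : ℝ) (f : RN N → ℂ) (x : RN N) :
    vf c (r • f) x = r • vf c f x := by
  simp only [vf, pd, fderiv_const_smul_field, Pi.smul_apply, smul_apply, smul_sum, mul_smul_comm]

lemma vf_add (c : Fin N → ℂ) {x : RN N} (hf : DifferentiableAt ℝ f x)
    (hg : DifferentiableAt ℝ g x) : vf c (f + g) x = vf c f x + vf c g x := by
  simp only [vf, pd, fderiv_add hf hg, add_apply, mul_add, sum_add_distrib]

lemma vf_sub (c : Fin N → ℂ) {x : RN N} (hf : DifferentiableAt ℝ f x)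
    (hg : DifferentiableAt ℝ g x) : vf c (f - g) x = vf c f x - vf c g x := by
  simp only [vf, pd, fderiv_sub hf hg, sub_apply, mul_sub, sum_sub_distrib]

lemma contDiff_pd (i : Fin N) (hf : ContDiff ℝ (⊤ : ℕ∞) f) : ContDiff ℝ (⊤ : ℕ∞) (pd i f) :=
  (hf.fderiv_right (by simp)).clm_apply contDiff_const

lemma contDiff_vf (c : Fin N → ℂ) (hf : ContDiff ℝ (⊤ : ℕ∞) f) : ContDiff ℝ (⊤ : ℕ∞) (vf c f) :=
  ContDiff.sum fun i _ => contDiff_const.mul (contDiff_pd i hf)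

lemma pd_comm (i j : Fin N) (hf : ContDiff ℝ 2 f) (x : RN N) :
    pd i (pd j f) x = pd j (pd i f) x := by
  have hdiff : DifferentiableAt ℝ (fderiv ℝ f) x :=
    (hf.fderiv_right (m := 1) le_rfl).differentiable one_ne_zero x
  have hsecond (k l : Fin N) : pd k (pd l f) x =
      fderiv ℝ (fderiv ℝ f) x (EuclideanSpace.single k 1) (EuclideanSpace.single l 1) := by
    change fderiv ℝ (fun y => fderiv ℝ f y (EuclideanSpace.single l 1)) x _ = _
    rw [fderiv_clm_apply hdiff (differentiableAt_const _)]
    simp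
  rw [hsecond, hsecond]
  exact (hf.contDiffAt.isSymmSndFDerivAt (by simp)).eq _ _

lemma vf_vf (c d : Fin N → ℂ) (hf : ContDiff ℝ 2 f) (x : RN N) :
    vf c (vf d f) x = ∑ i, ∑ j, c i * d j * pd i (pd j f) x := by
  have hdiff (j : Fin N) : DifferentiableAt ℝ (pd j f) x :=
    ((hf.fderiv_right (m := 1) le_rfl).clm_apply contDiff_const).differentiable one_ne_zero x
  have hpd (i : Fin N) : pd i (vf d f) x = ∑ j, d j * pd i (pd j f) x := by
    change fderiv ℝ (fun y => ∑ j, d j * pd j f y) x _ = _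
    rw [fderiv_fun_sum fun j _ => (hdiff j).const_mul (d j)]
    simp only [fderiv_const_mul (hdiff _), _root_.sum_apply, smul_apply, smul_eq_mul]
    rfl
  rw [vf]
  simp only [hpd, mul_sum, mul_assoc]

lemma vf_comm (c d : Fin N → ℂ) (hf : ContDiff ℝ 2 f) (x : RN N) :
    vf c (vf d f) x = vf d (vf c f) x := by
  rw [vf_vf c d hf, vf_vf d c hf, sum_comm]
  exact sum_congr rfl fun i _ => sum_congr rfl fun j _ => by rw [pd_comm j i hf, mul_comm (c j)]

lemma tsupport_vf_subset (c : Fin N → ℂ) (f : RN N → ℂ) : tsupport (vf c f) ⊆ tsupport f := by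
  refine closure_minimal (fun x hx => ?_) isClosed_closure
  by_contra hfx
  have hzero : fderiv ℝ f x = 0 := by
    by_contra h
    exact hfx (support_fderiv_subset ℝ h)
  exact hx (by simp [vf, pd, hzero])

lemma IsTest.vf (c : Fin N → ℂ) (hf : IsTest f) : IsTest (vf c f) :=
  ⟨contDiff_vf c hf.1, hf.2.of_isClosed_subset (isClosed_tsupport _) (tsupport_vf_subset c f)⟩

lemma IsTest.memLp (hf : IsTest f) (p : ℝ≥0∞) : MemLp f p volume :=
  hf.1.continuous.memLp_of_hasCompactSupport hf.2

end Calculus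

section FieldNorm

variable {n N : ℕ} {p : ℝ≥0∞}

lemma eLpNorm_le_vLpNorm (V : Fin n → RN N → ℂ) (p : ℝ≥0∞) (k : Fin n) :
    eLpNorm (V k) p volume ≤ vLpNorm V p :=
  eLpNorm_mono fun x => PiLp.norm_apply_le (WithLp.toLp 2 fun k => V k x) k

lemma vLpNorm_le_sum_eLpNorm {V : Fin n → RN N → ℂ}
    (hV : ∀ k, AEStronglyMeasurable (V k) volume) (hp : 1 ≤ p) :
    vLpNorm V p ≤ ∑ k, eLpNorm (V k) p volume := by
  have hsum := eLpNorm_sum_le (s := univ) (fun k _ => (hV k).norm) hp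
  simp only [eLpNorm_norm] at hsum
  refine (eLpNorm_mono_real fun x => ?_).trans hsum
  rw [EuclideanSpace.norm_eq, Finset.sum_apply, Real.sqrt_le_left (by positivity)]
  exact sum_sq_le_sq_sum_of_nonneg fun k _ => norm_nonneg (V k x)

lemma vLpNorm_lt_top {V : Fin n → RN N → ℂ} (hV : ∀ k, IsTest (V k)) (p : ℝ≥0∞) :
    vLpNorm V p < ⊤ :=
  (MemLp.of_eval_piLp fun k => (hV k).memLp p).2

lemma vLpNorm_real_smul (r : ℝ) (V : Fin n → RN N → ℂ) (p : ℝ≥0∞) :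
    vLpNorm (fun k => r • V k) p = ‖r‖ₑ * vLpNorm V p :=
  eLpNorm_const_smul r (fun x => (WithLp.equiv 2 (Fin n → ℂ)).symm fun k => V k x) p volume

lemma exists_eLpNorm_vf_conj_le (N : ℕ) (hp : 1 < p) (hptop : p ≠ ⊤) :
    ∃ K : ℝ≥0, ∀ (c : Fin N → ℂ) (f : RN N → ℂ), IsTest f →
      eLpNorm (vf c fun y => conj (f y)) p volume ≤ K * eLpNorm (vf c f) p volume := by
  have hp0 : p ≠ 0 := (zero_lt_one.trans hp).ne'
  have hr : 1 < p.toReal := by simpa using (ENNReal.toReal_lt_toReal ENNReal.one_ne_top hptop).2 hp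
  obtain ⟨C, hC, hineq⟩ := exists_integral_norm_vf_conj_coeff_rpow_le N hr
  refine ⟨(C ^ p.toReal⁻¹).toNNReal, fun c f hf => ?_⟩
  have hconj : eLpNorm (vf c fun y => conj (f y)) p volume
      = eLpNorm (vf (fun i => conj (c i)) f) p volume :=
    eLpNorm_congr_norm_ae (.of_forall fun x => by rw [vf_conj, RCLike.norm_conj])
  rw [hconj, ((hf.vf _).memLp p).eLpNorm_eq_integral_rpow_norm hp0 hptop,
    ((hf.vf c).memLp p).eLpNorm_eq_integral_rpow_norm hp0 hptop, ← ENNReal.ofReal,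
    ← ENNReal.ofReal_mul (by positivity), ← Real.mul_rpow hC (by positivity)]
  gcongr
  exact hineq c f hf

lemma exists_vLpNorm_vf_conj_le (n N : ℕ) (hp : 1 < p) (hptop : p ≠ ⊤) :
    ∃ K : ℝ≥0, ∀ (c : Fin n → Fin N → ℂ) (f : RN N → ℂ), IsTest f →
      vLpNorm (fun k => vf (c k) fun y => conj (f y)) p ≤ K * vLpNorm (fun k => vf (c k) f) p := by
  obtain ⟨K, hK⟩ := exists_eLpNorm_vf_conj_le N hp hptop
  refine ⟨n * K, fun c f hf => ?_⟩
  have hconj : ContDiff ℝ (⊤ : ℕ∞) fun y => conj (f y) := Complex.conjCLE.contDiff.comp hf.1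
  calc vLpNorm (fun k => vf (c k) fun y => conj (f y)) p
      ≤ ∑ k, eLpNorm (vf (c k) fun y => conj (f y)) p volume :=
        vLpNorm_le_sum_eLpNorm
          (fun k => (contDiff_vf (c k) hconj).continuous.aestronglyMeasurable) hp.le
    _ ≤ ∑ _k : Fin n, K * vLpNorm (fun k => vf (c k) f) p := by
        refine sum_le_sum fun k _ => (hK (c k) f hf).trans ?_
        gcongr
        exact eLpNorm_le_vLpNorm (fun k => vf (c k) f) p k
    _ = _ := by simp [mul_assoc]

end FieldNorm

section Curl

variable {n N : ℕ} {p : ℝ≥0∞}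

/-- The curl `(L_i W_j - L_j W_i)_{ij}` of the field `W` with respect to the constant-coefficient
vector fields `L_j` with coefficients `c j`. -/
def curlL (c : Fin n → Fin N → ℂ) (W : Fin n → RN N → ℂ) (i j : Fin n) (x : RN N) : ℂ :=
  vf (c i) (W j) x - vf (c j) (W i) x

lemma curlL_add (c : Fin n → Fin N → ℂ) {W W' : Fin n → RN N → ℂ}
    (hW : ∀ k, Differentiable ℝ (W k)) (hW' : ∀ k, Differentiable ℝ (W' k)) (i j : Fin n) :
    curlL c (W + W') i j = curlL c W i j + curlL c W' i j := by
  ext x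
  simp only [curlL, Pi.add_apply, vf_add _ (hW _ x) (hW' _ x)]
  ring

lemma continuous_curlL (c : Fin n → Fin N → ℂ) {W : Fin n → RN N → ℂ}
    (hW : ∀ k, ContDiff ℝ (⊤ : ℕ∞) (W k)) (i j : Fin n) : Continuous (curlL c W i j) :=
  (contDiff_vf _ (hW j)).continuous.sub (contDiff_vf _ (hW i)).continuous

lemma mLpNorm_curlL_add_le (c : Fin n → Fin N → ℂ) {W W' : Fin n → RN N → ℂ}
    (hW : ∀ k, ContDiff ℝ (⊤ : ℕ∞) (W k)) (hW' : ∀ k, ContDiff ℝ (⊤ : ℕ∞) (W' k)) (hp : 1 ≤ p) :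
    mLpNorm (curlL c (W + W')) p ≤ mLpNorm (curlL c W) p + mLpNorm (curlL c W') p := by
  have hmeas {U : Fin n → RN N → ℂ} (hU : ∀ k, ContDiff ℝ (⊤ : ℕ∞) (U k)) :
      AEStronglyMeasurable (fun x => (WithLp.equiv 2 (Fin n × Fin n → ℂ)).symm
        fun ij => curlL c U ij.1 ij.2 x) volume :=
    ((PiLp.continuous_toLp 2 fun _ : Fin n × Fin n => ℂ).comp
      (continuous_pi fun ij => continuous_curlL c hU ij.1 ij.2)).aestronglyMeasurable
  refine le_of_eq_of_le ?_ (eLpNorm_add_le (hmeas hW) (hmeas hW') hp)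
  simp only [mLpNorm, curlL_add c (fun k => (hW k).differentiable (by simp))
    fun k => (hW' k).differentiable (by simp)]
  rfl

lemma vf_single (c : Fin N → ℂ) (i : Fin n) (u : RN N → ℂ) (k : Fin n) (x : RN N) :
    vf c ((Pi.single i u : Fin n → RN N → ℂ) k) x = if k = i then vf c u x else 0 := by
  rcases eq_or_ne k i with rfl | h
  · simp
  · simp [h, vf_zero]

lemma norm_sq_curlL_single_le (c : Fin n → Fin N → ℂ) (k : Fin n) (u : RN N → ℂ) (i j : Fin n)
    (x : RN N) : ‖curlL c (Pi.single k u) i j x‖ ^ 2 ≤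
      (if j = k then ‖vf (c i) u x‖ ^ 2 else 0) + if i = k then ‖vf (c j) u x‖ ^ 2 else 0 := by
  rw [curlL, vf_single, vf_single]
  split_ifs with hj hi hi
  · rw [hi, hj, sub_self, norm_zero, zero_pow two_ne_zero]
    positivity
  all_goals simp

lemma mLpNorm_curlL_single_le (c : Fin n → Fin N → ℂ) (k : Fin n) (u : RN N → ℂ) (p : ℝ≥0∞) :
    mLpNorm (curlL c (Pi.single k u)) p ≤
      ENNReal.ofReal √2 * vLpNorm (fun l => vf (c l) u) p := by
  refine eLpNorm_le_mul_eLpNorm_of_ae_le_mul (.of_forall fun x => ?_) p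
  refine le_of_sq_le_sq ?_ (by positivity)
  rw [mul_pow, Real.sq_sqrt zero_le_two, EuclideanSpace.norm_sq_eq, EuclideanSpace.norm_sq_eq,
    Fintype.sum_prod_type]
  refine (sum_le_sum fun i _ => sum_le_sum fun j _ =>
    norm_sq_curlL_single_le c k u i j x).trans_eq ?_
  simp only [sum_add_distrib, sum_ite_eq', mem_univ, if_true]
  simp [two_mul]

lemma mLpNorm_curlL_single_real_smul_le (c : Fin n → Fin N → ℂ) (k : Fin n) (r : ℝ)
    (u : RN N → ℂ) (p : ℝ≥0∞) : mLpNorm (curlL c (Pi.single k (r • u))) p ≤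
      ENNReal.ofReal √2 * (‖r‖ₑ * vLpNorm (fun l => vf (c l) u) p) := by
  refine (mLpNorm_curlL_single_le c k (r • u) p).trans_eq ?_
  rw [← vLpNorm_real_smul]
  congr! 3 with l
  exact funext (vf_real_smul (c l) r u)

end Curl

section DivergenceFreeField

variable {n N : ℕ}

lemma contDiff_piSingle {i : Fin n} {u : RN N → ℂ} (hu : ContDiff ℝ (⊤ : ℕ∞) u) (k : Fin n) :
    ContDiff ℝ (⊤ : ℕ∞) ((Pi.single i u : Fin n → RN N → ℂ) k) := by
  rcases eq_or_ne k i with rfl | h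
  · simpa
  · rw [Pi.single_eq_of_ne h]
    exact contDiff_const

lemma tsupport_single_subset (i : Fin n) (u : RN N → ℂ) (k : Fin n) :
    tsupport ((Pi.single i u : Fin n → RN N → ℂ) k) ⊆ tsupport u := by
  rcases eq_or_ne k i with rfl | h
  · simp
  · simp [h, tsupport]

/-- The field `L̄_i h · e_j - L̄_j h · e_i`, where `L̄_k` has coefficients `conj (c k)`. It plays
the role of the rotated gradient of the stream function `h`. -/
def skewGradient (c : Fin n → Fin N → ℂ) (i j : Fin n) (h : RN N → ℂ) : Fin n → RN N → ℂ :=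
  Pi.single j (vf (fun l => conj (c i l)) h) - Pi.single i (vf (fun l => conj (c j l)) h)

lemma skewGradient_apply (c : Fin n → Fin N → ℂ) (i j : Fin n) (h : RN N → ℂ) (k : Fin n)
    (x : RN N) : skewGradient c i j h k x =
      (if k = j then vf (fun l => conj (c i l)) h x else 0)
        - if k = i then vf (fun l => conj (c j l)) h x else 0 := by
  simp only [skewGradient, Pi.sub_apply, Pi.single_apply]
  split_ifs <;> rfl

lemma contDiff_skewGradient (c : Fin n → Fin N → ℂ) (i j : Fin n) {h : RN N → ℂ}
    (hh : ContDiff ℝ (⊤ : ℕ∞) h) (k : Fin n) :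
    ContDiff ℝ (⊤ : ℕ∞) (skewGradient c i j h k) :=
  (contDiff_piSingle (contDiff_vf _ hh) k).sub (contDiff_piSingle (contDiff_vf _ hh) k)

lemma tsupport_skewGradient_subset (c : Fin n → Fin N → ℂ) (i j : Fin n) (h : RN N → ℂ)
    (k : Fin n) : tsupport (skewGradient c i j h k) ⊆ tsupport h :=
  (tsupport_sub _ _).trans <| Set.union_subset
    ((tsupport_single_subset j _ k).trans (tsupport_vf_subset _ h))
    ((tsupport_single_subset i _ k).trans (tsupport_vf_subset _ h))

lemma sum_vfStar_skewGradient (c : Fin n → Fin N → ℂ) (i j : Fin n) {h : RN N → ℂ}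
    (hh : ContDiff ℝ (⊤ : ℕ∞) h) (x : RN N) :
    ∑ k, vfStar (c k) (skewGradient c i j h k) x = 0 := by
  have hdiff (d : Fin N → ℂ) (k l : Fin n) :
      DifferentiableAt ℝ ((Pi.single k (vf d h) : Fin n → RN N → ℂ) l) x :=
    (contDiff_piSingle (contDiff_vf d hh) l).differentiable (by simp) x
  simp only [vfStar, skewGradient, Pi.sub_apply, vf_sub _ (hdiff _ _ _) (hdiff _ _ _), vf_single,
    sum_neg_distrib, sum_sub_distrib, sum_ite_eq', mem_univ, if_true]
  rw [vf_comm _ _ (contDiff_infty.1 hh 2), sub_self, neg_zero]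

lemma exists_isTest_vf_eq_coeff (l : Fin N) :
    ∃ h : RN N → ℂ, IsTest h ∧ tsupport h ⊆ ball 0 2 ∧
      ∀ c : Fin N → ℂ, ∀ x ∈ ball (0 : RN N) 1, vf c h x = c l := by
  let η : ContDiffBump (0 : RN N) := ⟨1, 3 / 2, one_pos, by norm_num⟩
  let coord : RN N →L[ℝ] ℂ := Complex.ofRealCLM ∘L EuclideanSpace.proj l
  have hsupp : tsupport (fun y => η y • coord y) ⊆ closedBall 0 (3 / 2) :=
    (tsupport_smul_subset_left η coord).trans η.tsupport_eq.subset
  refine ⟨fun y => η y • coord y, ⟨η.contDiff.smul coord.contDiff, ?_⟩,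
    hsupp.trans (closedBall_subset_ball (by norm_num)), fun c x hx => ?_⟩
  · exact (isCompact_closedBall _ _).of_isClosed_subset (isClosed_tsupport _) hsupp
  · have hlocal : (fun y => η y • coord y) =ᶠ[nhds x] coord := by
      filter_upwards [isOpen_ball.mem_nhds hx] with y hy
      rw [η.one_of_mem_closedBall (ball_subset_closedBall hy), one_smul]
    simp only [vf, pd, hlocal.fderiv_eq, coord.fderiv]
    simp [coord, apply_ite]

lemma exists_divergenceFree_eq_single_on_ball (c : Fin n → Fin N → ℂ) {i j : Fin n} {l : Fin N}
    (hi : c i l = 1) (hj : c j l = 0) (r : ℝ) :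
    ∃ V : Fin n → RN N → ℂ, (∀ k, IsTest (V k)) ∧ (∀ k, tsupport (V k) ⊆ ball 0 2) ∧
      (∀ x, ∑ k, vfStar (c k) (V k) x = 0) ∧
      ∀ x ∈ ball (0 : RN N) 1, ∀ k, V k x = if k = j then (r : ℂ) else 0 := by
  obtain ⟨h, hh, hsupp, hvf⟩ := exists_isTest_vf_eq_coeff l
  have hrsmooth : ContDiff ℝ (⊤ : ℕ∞) (r • h) := hh.1.const_smul r
  have hrsupp : tsupport (r • h) ⊆ tsupport h := tsupport_smul_subset_right (fun _ => r) h
  have hVsupp (k : Fin n) := (tsupport_skewGradient_subset c i j (r • h) k).trans hrsupp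
  refine ⟨skewGradient c i j (r • h), fun k => ⟨contDiff_skewGradient c i j hrsmooth k, ?_⟩,
    fun k => (hVsupp k).trans hsupp, sum_vfStar_skewGradient c i j hrsmooth, fun x hx k => ?_⟩
  · exact hh.2.of_isClosed_subset (isClosed_tsupport _) (hVsupp k)
  · simp [skewGradient_apply, vf_real_smul, hvf _ x hx, hi, hj]

end DivergenceFreeField

section SplitField

variable {n N : ℕ} {p : ℝ≥0∞} {s : ℝ} {i j : Fin n} {φ : RN N → ℂ}

/-- The field `√(1 - s²) φ e_i + s φ̄ e_j`, which for `i ≠ j` has pointwise length `|φ|`. The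
conjugate in the second component makes its pairing with `s⁻¹ e_j` equal to `φ`. -/
def splitField (s : ℝ) (i j : Fin n) (φ : RN N → ℂ) : Fin n → RN N → ℂ :=
  Pi.single i (√(1 - s ^ 2) • φ) + Pi.single j (s • fun y => conj (φ y))

lemma splitField_apply (s : ℝ) (i j : Fin n) (φ : RN N → ℂ) (k : Fin n) (x : RN N) :
    splitField s i j φ k x =
      (if k = i then √(1 - s ^ 2) • φ x else 0) + if k = j then s • conj (φ x) else 0 := by
  simp only [splitField, Pi.add_apply, Pi.single_apply]
  split_ifs <;> rfl

lemma contDiff_splitField (s : ℝ) (i j : Fin n) (hφ : ContDiff ℝ (⊤ : ℕ∞) φ) (k : Fin n) :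
    ContDiff ℝ (⊤ : ℕ∞) (splitField s i j φ k) := by
  have hconj : ContDiff ℝ (⊤ : ℕ∞) (s • fun y => conj (φ y)) :=
    ContDiff.const_smul s (Complex.conjCLE.contDiff.comp hφ)
  have hroot : ContDiff ℝ (⊤ : ℕ∞) (√(1 - s ^ 2) • φ) := hφ.const_smul √(1 - s ^ 2)
  exact (contDiff_piSingle hroot k).add (contDiff_piSingle hconj k)

lemma tsupport_splitField_subset (s : ℝ) (i j : Fin n) (φ : RN N → ℂ) (k : Fin n) :
    tsupport (splitField s i j φ k) ⊆ tsupport φ := by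
  refine closure_mono fun x hx hφ => hx ?_
  simp [splitField_apply, hφ]

lemma sum_mul_conj_splitField (hij : i ≠ j) (hs : s ≠ 0) {v : Fin n → ℂ}
    (hv : ∀ k, v k = if k = j then ((s⁻¹ : ℝ) : ℂ) else 0) (φ : RN N → ℂ) (x : RN N) :
    ∑ k, v k * conj (splitField s i j φ k x) = φ x := by
  simp [hv, splitField_apply, hij.symm, hs]

lemma vLpNorm_splitField (hij : i ≠ j) (hs : s ^ 2 ≤ 1) (φ : RN N → ℂ) (p : ℝ≥0∞) :
    vLpNorm (splitField s i j φ) p = eLpNorm φ p volume := by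
  refine eLpNorm_congr_norm_ae (.of_forall fun x => ?_)
  rw [← sq_eq_sq₀ (norm_nonneg _) (norm_nonneg _), EuclideanSpace.norm_sq_eq]
  have hcomponent (k : Fin n) : ‖splitField s i j φ k x‖ ^ 2 =
      (if k = i then (1 - s ^ 2) * ‖φ x‖ ^ 2 else 0) + if k = j then s ^ 2 * ‖φ x‖ ^ 2 else 0 := by
    rw [splitField_apply]
    split_ifs with hi hj hj
    · exact absurd (hi.symm.trans hj) hij
    · simp [mul_pow, Real.sq_sqrt (sub_nonneg.2 hs)]
    all_goals simp [mul_pow]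
  refine (sum_congr rfl fun k _ => hcomponent k).trans ?_
  simp only [sum_add_distrib, sum_ite_eq', mem_univ, if_true]
  ring

lemma mLpNorm_curlL_splitField_le (c : Fin n → Fin N → ℂ) (i j : Fin n)
    (hφ : ContDiff ℝ (⊤ : ℕ∞) φ) (hs : 0 ≤ s) {K : ℝ≥0} (hsK : 3 * (s * K) ≤ 1) (hp : 1 ≤ p)
    (hK : vLpNorm (fun k => vf (c k) fun y => conj (φ y)) p ≤
      K * vLpNorm (fun k => vf (c k) φ) p) :
    mLpNorm (curlL c (splitField s i j φ)) p ≤ 2 * vLpNorm (fun k => vf (c k) φ) p := by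
  set G := vLpNorm (fun k => vf (c k) φ) p
  have hconj : ContDiff ℝ (⊤ : ℕ∞) (s • fun y => conj (φ y)) :=
    ContDiff.const_smul s (Complex.conjCLE.contDiff.comp hφ)
  have hadd := mLpNorm_curlL_add_le c (contDiff_piSingle (i := i) (hφ.const_smul √(1 - s ^ 2)))
    (contDiff_piSingle (i := j) hconj) hp
  have hroot : ‖√(1 - s ^ 2)‖ₑ ≤ ENNReal.ofReal 1 := by
    rw [Real.enorm_of_nonneg (Real.sqrt_nonneg _)]
    exact ENNReal.ofReal_le_ofReal (Real.sqrt_le_one.2 (by nlinarith))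
  have hconst : √2 * (1 + s * K) ≤ 2 := by
    have hsqrt : √2 ≤ 3 / 2 := Real.sqrt_le_left (by norm_num) |>.2 (by norm_num)
    calc √2 * (1 + s * K) ≤ 3 / 2 * (4 / 3) := by gcongr; linarith
      _ = 2 := by norm_num
  calc mLpNorm (curlL c (splitField s i j φ)) p
      ≤ ENNReal.ofReal √2 * (‖√(1 - s ^ 2)‖ₑ * G)
        + ENNReal.ofReal √2 * (‖s‖ₑ * vLpNorm (fun k => vf (c k) fun y => conj (φ y)) p) :=
        hadd.trans (add_le_add (mLpNorm_curlL_single_real_smul_le c i _ φ p)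
          (mLpNorm_curlL_single_real_smul_le c j s _ p))
    _ ≤ ENNReal.ofReal √2 * (ENNReal.ofReal 1 * G)
        + ENNReal.ofReal √2 * (ENNReal.ofReal s * (ENNReal.ofReal K * G)) := by
        rw [Real.enorm_of_nonneg hs, ENNReal.ofReal_coe_nnreal]
        gcongr
    _ = ENNReal.ofReal (√2 * (1 + s * K)) * G := by
        rw [ENNReal.ofReal_mul (by positivity), ENNReal.ofReal_add zero_le_one (by positivity),
          ENNReal.ofReal_mul hs]
        ring
    _ ≤ 2 * G := by
        gcongr
        exact ENNReal.ofReal_le_of_le_toReal (by simpa using hconst)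

end SplitField

theorem statement17_general (n m : ℕ) (hn : 2 ≤ n) (a : Fin n → Fin m → ℂ) {q : ℝ≥0∞}
    (hq : 1 < q) (hqtop : q ≠ ⊤) :
    ∃ V : Fin n → RN (n + m) → ℂ,
      (∀ k, IsTest (V k)) ∧ (∀ k, tsupport (V k) ⊆ ball 0 2) ∧
      (∀ x, ∑ k, vfStar (normCoeff a k) (V k) x = 0) ∧
      ∀ φ : RN (n + m) → ℂ, IsTest φ → tsupport φ ⊆ ball 0 1 →
        ∃ W : Fin n → RN (n + m) → ℂ,
          (∀ k, ContDiff ℝ (⊤ : ℕ∞) (W k)) ∧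
          (∀ x, ∑ k, V k x * conj (W k x) = φ x) ∧
          (∀ k, tsupport (W k) ⊆ ball 0 1) ∧
          vLpNorm W q = eLpNorm φ q volume ∧
          mLpNorm (fun i j x =>
              vf (normCoeff a i) (W j) x - vf (normCoeff a j) (W i) x) q ≤
            2 * vLpNorm (fun k => vf (normCoeff a k) φ) q := by
  obtain ⟨K, hK⟩ := exists_vLpNorm_vf_conj_le n (n + m) hq hqtop
  let s : ℝ := (1 + 3 * K)⁻¹
  have hs : 0 < s := by positivity
  have hs_one : s ≤ 1 := inv_le_one_of_one_le₀ (by simp)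
  have hsK : 3 * (s * K) ≤ 1 := by
    nlinarith [inv_mul_cancel₀ (show (1 + 3 * K : ℝ) ≠ 0 by positivity)]
  let i : Fin n := ⟨0, by lia⟩
  let j : Fin n := ⟨1, by lia⟩
  have hij : i ≠ j := by simp [i, j]
  obtain ⟨V, hV, hVsupp, hVdiv, hVball⟩ := exists_divergenceFree_eq_single_on_ball (normCoeff a)
    (i := i) (j := j) (l := Fin.castAdd m i) (by simp [normCoeff]) (by simp [normCoeff, hij]) s⁻¹
  refine ⟨V, hV, hVsupp, hVdiv, fun φ hφ hφsupp => ⟨splitField s i j φ,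
    contDiff_splitField s i j hφ.1, fun x => ?_,
    fun k => (tsupport_splitField_subset s i j φ k).trans hφsupp,
    vLpNorm_splitField hij (pow_le_one₀ hs.le hs_one) φ q,
    mLpNorm_curlL_splitField_le _ i j hφ.1 hs.le hsK hq.le (hK _ φ hφ)⟩⟩
  by_cases hx : x ∈ ball 0 1
  · exact sum_mul_conj_splitField hij hs.ne' (hVball x hx) φ x
  · have hφx : φ x = 0 := image_eq_zero_of_notMem_tsupport fun h => hx (hφsupp h)
    simp [splitField_apply, hφx]

/-- Lemma 5.1, second part. Every `φ ∈ C_c^∞(B(0,1))` can be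
written as `φ = V₂ ⋅ W₂` with `supp W₂ ⊂ B(0,1)`, `supp V₂ ⊂ B(0,2)`,
`div_{L*} V₂ = 0`, `‖V₂‖_{L^p} ≤ C₂` (with `C₂` independent of `φ`),
`‖W₂‖_{L^{p'}} = ‖φ‖_{L^{p'}}` and `‖curl_L W₂‖_{L^{p'}} ≤ 2 ‖∇_L φ‖_{L^{p'}}`. -/
theorem statement17 (n m : ℕ) (hn : 2 ≤ n) (a : Fin n → Fin m → ℂ)
    (p p' : ℝ≥0∞) (hp : 1 < p) (hptop : p ≠ ⊤) (hpp' : 1 / p + 1 / p' = 1) :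
    ∃ C₂ : ℝ≥0, 0 < C₂ ∧
      ∀ φf : RN (n + m) → ℂ, IsTest φf → tsupport φf ⊆ ball 0 1 →
        ∃ V W : Fin n → RN (n + m) → ℂ,
          (∀ k, ContDiff ℝ (⊤ : ℕ∞) (V k)) ∧ (∀ k, ContDiff ℝ (⊤ : ℕ∞) (W k)) ∧
          (∀ x, ∑ k, V k x * conj (W k x) = φf x) ∧
          (∀ k, tsupport (W k) ⊆ ball 0 1) ∧
          (∀ k, tsupport (V k) ⊆ ball 0 2) ∧
          (∀ x, ∑ k, vfStar (normCoeff a k) (V k) x = 0) ∧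
          vLpNorm V p ≤ C₂ ∧
          vLpNorm W p' = eLpNorm φf p' volume ∧
          mLpNorm (fun i j x =>
              vf (normCoeff a i) (W j) x - vf (normCoeff a j) (W i) x) p' ≤
            2 * vLpNorm (fun k => vf (normCoeff a k) φf) p' := by
  have hconj : p.HolderConjugate p' := ENNReal.holderConjugate_iff.2 (by simpa using hpp')
  have hconj' : p'.HolderConjugate p := ENNReal.HolderConjugate.symm
  obtain ⟨V, hV, hVsupp, hVdiv, hVW⟩ := statement17_general n m hn a
    ((ENNReal.HolderConjugate.lt_top_iff_one_lt p p').1 hptop.lt_top)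
    ((ENNReal.HolderConjugate.lt_top_iff_one_lt p' p).2 hp).ne
  refine ⟨(vLpNorm V p).toNNReal + 1, by positivity, fun φ hφ hφsupp => ?_⟩
  obtain ⟨W, hW, hprod, hWsupp, hWnorm, hWcurl⟩ := hVW φ hφ hφsupp
  refine ⟨V, W, fun k => (hV k).1, hW, hprod, hWsupp, hVsupp, hVdiv, ?_, hWnorm, hWcurl⟩
  rw [ENNReal.coe_add, ENNReal.coe_toNNReal (vLpNorm_lt_top hV p).ne]
  exact le_self_add

end
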